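/- arXiv:0712.2559 — 2 statements merged into one kernel-verified Lean document; each statement's English description precedes it below -/
import Mathlib

section
/- Let $\mathbb{R}_{\max}=\mathbb{R}\cup\{-\infty\}$ be the max-plus semiring, whose addition is $\max$ and whose multiplication is $+$; for a $d\times d$ matrix $A$ and a vector $v$ with entries in $\mathbb{R}_{\max}$, write $(A\otimes v)_i=\max_j(A_{ij}+v_j)$. Let $(A(n))_{n\in\mathbb{Z}}$ be a stationary and ergodic sequence of random $d\times d$ matrices with entries in $\mathbb{R}_{\max}$ such that the positive part of $\max_{ij}A_{ij}(0)$ is integrable. For $n\in\mathbb{N}$ put $x(n,0)=A(n-1)\otimes\cdots\otimes A(0)\otimes 0$ and $y(n,0)=A(-1)\otimes\cdots\otimes A(-n)\otimes 0$, where the last factor $0$ is the zero vector. Then there exists a constant $\gamma\in\mathbb{R}\cup\{-\infty\}$ such that $\frac1n\max_i x_i(n,0)$ converges to $\gamma$ almost surely and $\frac1n\max_i y_i(n,0)$ converges to $\gamma$ almost surely. (This constant is called the maximal Lyapunov exponent $\gamma(A)$.) -/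
open Filter MeasureTheory Topology

noncomputable section

/-- Max-plus product of a `d × d` matrix and a vector: `(A ⊗ v) i = max_j (A i j + v j)`.
The semiring `ℝ_max = ℝ ∪ {-∞}` is encoded as the elements of `EReal` other than `⊤`;
on these, the addition of `EReal` is the product of `ℝ_max`. -/
def mpVec {d : ℕ} (A : Fin d → Fin d → EReal) (v : Fin d → EReal) : Fin d → EReal :=
  fun i => ⨆ j, A i j + v j

/-- `mpApply A m v n = A (m + n - 1) ⊗ ⋯ ⊗ A (m + 1) ⊗ A m ⊗ v` (`n` matrices). -/
def mpApply {d : ℕ} (A : ℤ → Fin d → Fin d → EReal) (m : ℤ) (v : Fin d → EReal) :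
    ℕ → Fin d → EReal
  | 0 => v
  | n + 1 => mpVec (A (m + n)) (mpApply A m v n)

/-- `x(n, 0) = A(n-1) ⊗ ⋯ ⊗ A(0) ⊗ 0`. -/
def xVec {d : ℕ} (A : ℤ → Fin d → Fin d → EReal) (n : ℕ) : Fin d → EReal :=
  mpApply A 0 (fun _ => 0) n

/-- `y(n, 0) = A(-1) ⊗ ⋯ ⊗ A(-n) ⊗ 0`. -/
def yVec {d : ℕ} (A : ℤ → Fin d → Fin d → EReal) (n : ℕ) : Fin d → EReal :=
  mpApply A (-n) (fun _ => 0) n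

/-- The left shift on two-sided sequences. -/
def seqShift {E : Type*} (u : ℤ → E) : ℤ → E := fun n => u (n + 1)

/-- A sequence `(X n)_{n ∈ ℤ}` of random variables is stationary and ergodic if its law on the
space of two-sided sequences is preserved by the shift (stationarity) and the shift is
ergodic for this law; `Ergodic` contains both. -/
def IsStationaryErgodic {Ω E : Type*} [MeasurableSpace Ω] [MeasurableSpace E]
    (X : ℤ → Ω → E) (μ : Measure Ω) : Prop :=
  (∀ n, Measurable (X n)) ∧ Ergodic (seqShift (E := E)) (μ.map fun ω n => X n ω)

end

open scoped ENNReal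

/-- Greedy covering: if from every `k ∈ E` some block of length at most `L` has average at
least `ε`, then the visits to `E` are paid for by the sum. -/
theorem sum_indicator_le_sum_of_block_average_ge (a : ℕ → ℝ≥0∞) (ε : ℝ≥0∞) (L : ℕ) (E : Set ℕ)
    (hE : ∀ k ∈ E, ∃ l, 1 ≤ l ∧ l ≤ L ∧ ε * l ≤ ∑ i ∈ Finset.range l, a (k + i)) (n k : ℕ) :
    ∑ i ∈ Finset.range n, E.indicator (fun _ => ε) (k + i)
      ≤ ∑ i ∈ Finset.range (n + L), a (k + i) := by
  induction n using Nat.strong_induction_on generalizing k with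
  | _ n ih =>
  by_cases hk : k ∈ E
  · obtain ⟨l, hl1, hlL, hl⟩ := hE k hk
    rcases le_or_gt n l with hnl | hln
    · calc ∑ i ∈ Finset.range n, E.indicator (fun _ => ε) (k + i)
          ≤ ∑ _i ∈ Finset.range n, ε :=
            Finset.sum_le_sum fun i _ => Set.indicator_le_self' (by simp) _
        _ = ε * n := by simp [mul_comm]
        _ ≤ ε * l := by gcongr
        _ ≤ ∑ i ∈ Finset.range l, a (k + i) := hl
        _ ≤ _ := Finset.sum_le_sum_of_subset (Finset.range_mono (by omega))
    · obtain ⟨m, rfl⟩ := Nat.exists_eq_add_of_lt hln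
      rw [show l + m + 1 = l + (m + 1) by ring, add_assoc l (m + 1) L,
        Finset.sum_range_add _ l (m + 1), Finset.sum_range_add _ l (m + 1 + L)]
      apply add_le_add
      · refine le_trans ?_ hl
        calc ∑ i ∈ Finset.range l, E.indicator (fun _ => ε) (k + i)
            ≤ ∑ _i ∈ Finset.range l, ε :=
              Finset.sum_le_sum fun i _ => Set.indicator_le_self' (by simp) _
          _ = ε * l := by simp [mul_comm]
      · simpa only [add_assoc] using ih (m + 1) (by omega) (k + l)
  · cases n with
    | zero => simp
    | succ n =>
      rw [Finset.sum_range_succ', show n + 1 + L = n + L + 1 by ring, Finset.sum_range_succ']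
      simp only [add_zero, Set.indicator_of_notMem hk]
      refine le_trans ?_ le_self_add
      simpa only [add_assoc, add_comm, add_left_comm] using ih n (by omega) (k + 1)

theorem subadditive_le_sum {G : ℕ → ℕ → EReal} {h : ℕ → ℝ≥0∞} (h0 : ∀ k, G k 0 ≤ 0)
    (hs : ∀ k l m, G k (l + m) ≤ G k l + G (k + l) m) (h1 : ∀ k, G k 1 ≤ h k) (n k : ℕ) :
    G k n ≤ ((∑ i ∈ Finset.range n, h (k + i) : ℝ≥0∞) : EReal) := by
  induction n with
  | zero => simpa using h0 k
  | succ n ih =>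
    rw [Finset.sum_range_succ, EReal.coe_ennreal_add]
    exact (hs k n 1).trans (add_le_add ih (h1 _))

/-- Greedy covering for a subadditive array: outside `A`, blocks of length at most `N` cost
nothing, and steps inside `A` are paid for by `φ`. -/
theorem subadditive_le_of_cover {G : ℕ → ℕ → EReal} {h φ : ℕ → ℝ≥0∞} {K : ℝ≥0∞} {N : ℕ}
    {A : Set ℕ} (h0 : ∀ k, G k 0 ≤ 0) (hs : ∀ k l m, G k (l + m) ≤ G k l + G (k + l) m)
    (h1 : ∀ k, G k 1 ≤ h k) (hA : ∀ k ∈ A, h k ≤ φ k) (hK : ∀ k, h k ≤ K + φ k)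
    (hgood : ∀ k ∉ A, ∃ l, 1 ≤ l ∧ l ≤ N ∧ G k l ≤ 0) (n k : ℕ) :
    G k n ≤ ((N * K + ∑ i ∈ Finset.range n, φ (k + i) : ℝ≥0∞) : EReal) := by
  induction n using Nat.strong_induction_on generalizing k with
  | _ n ih =>
  rcases le_or_gt n N with hnN | hNn
  · refine (subadditive_le_sum h0 hs h1 n k).trans (EReal.coe_ennreal_le_coe_ennreal_iff.2 ?_)
    calc ∑ i ∈ Finset.range n, h (k + i)
        ≤ ∑ i ∈ Finset.range n, (K + φ (k + i)) := Finset.sum_le_sum fun i _ => hK _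
      _ = n * K + ∑ i ∈ Finset.range n, φ (k + i) := by simp [Finset.sum_add_distrib]
      _ ≤ _ := by gcongr
  · by_cases hk : k ∈ A
    · obtain ⟨n, rfl⟩ : ∃ m, n = 1 + m := ⟨n - 1, by omega⟩
      refine (hs k 1 n).trans ((add_le_add (h1 k) (ih n (by omega) (k + 1))).trans ?_)
      rw [← EReal.coe_ennreal_add, EReal.coe_ennreal_le_coe_ennreal_iff, Finset.sum_range_add]
      simp only [Finset.range_one, Finset.sum_singleton, add_zero, add_assoc]
      rw [add_left_comm]
      gcongr
      exact hA k hk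
    · obtain ⟨l, hl1, hlN, hl⟩ := hgood k hk
      obtain ⟨n, rfl⟩ : ∃ m, n = l + m := ⟨n - l, by omega⟩
      refine (hs k l n).trans ((add_le_add hl (ih n (by omega) (k + l))).trans ?_)
      rw [zero_add, EReal.coe_ennreal_le_coe_ennreal_iff, Finset.sum_range_add]
      simp only [add_assoc]
      gcongr
      exact le_add_self

theorem le_coe_toENNReal (a : EReal) : a ≤ a.toENNReal := by
  rw [EReal.coe_toENNReal_eq_max]
  exact le_max_right _ _

section SubadditiveErgodic

variable {X : Type*} [MeasurableSpace X] {ν : Measure X} {T : X → X}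

theorem lintegral_sum_iterate (hT : MeasurePreserving T ν ν) {φ : X → ℝ≥0∞}
    (hφ : Measurable φ) (n : ℕ) :
    ∫⁻ x, ∑ i ∈ Finset.range n, φ (T^[i] x) ∂ν = n * ∫⁻ x, φ x ∂ν := by
  rw [lintegral_finsetSum _ fun i _ => by exact hφ.comp (hT.iterate i).measurable]
  simp [(hT.iterate _).lintegral_comp hφ]

/-- **Maximal ergodic inequality** for nonnegative functions. -/
theorem mul_measure_exists_average_gt_le_lintegral
    (hT : MeasurePreserving T ν ν) {φ : X → ℝ≥0∞} (hφ : Measurable φ) (ε : ℝ≥0∞) :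
    ε * ν {x | ∃ l : ℕ, 1 ≤ l ∧ ε * l < ∑ i ∈ Finset.range l, φ (T^[i] x)} ≤ ∫⁻ x, φ x ∂ν := by
  by_cases hI : ∫⁻ x, φ x ∂ν = ∞
  · simp [hI]
  have hmeas : ∀ l, Measurable fun x => ∑ i ∈ Finset.range l, φ (T^[i] x) := fun l =>
    Finset.measurable_sum _ fun i _ => hφ.comp (hT.iterate i).measurable
  set E : ℕ → Set X := fun L =>
    {x | ∃ l : ℕ, (1 ≤ l ∧ l ≤ L) ∧ ε * l < ∑ i ∈ Finset.range l, φ (T^[i] x)} with hE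
  have hEm : ∀ L, MeasurableSet (E L) := fun L => by
    have : E L = ⋃ (l : ℕ) (_ : 1 ≤ l ∧ l ≤ L),
        {x | ε * l < ∑ i ∈ Finset.range l, φ (T^[i] x)} := by ext; simp [hE]
    rw [this]
    exact .iUnion fun l => .iUnion fun _ => measurableSet_lt measurable_const (hmeas l)
  have hmono : Monotone E := fun L L' h x ⟨l, ⟨h1, h2⟩, h3⟩ => ⟨l, ⟨h1, h2.trans h⟩, h3⟩
  have hunion : {x | ∃ l : ℕ, 1 ≤ l ∧ ε * l < ∑ i ∈ Finset.range l, φ (T^[i] x)} = ⋃ L, E L := by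
    ext x
    simp only [hE, Set.mem_ofPred_eq, Set.mem_iUnion]
    exact ⟨fun ⟨l, h1, h2⟩ => ⟨l, l, ⟨h1, le_rfl⟩, h2⟩, fun ⟨_, l, h1, h2⟩ => ⟨l, h1.1, h2⟩⟩
  rw [hunion, hmono.measure_iUnion, ENNReal.mul_iSup]
  refine iSup_le fun L => ?_
  have key : ∀ n : ℕ, n * (ε * ν (E L)) ≤ n * (∫⁻ x, φ x ∂ν) + L * ∫⁻ x, φ x ∂ν := fun n => by
    have h2 := lintegral_mono (μ := ν) fun x =>
      sum_indicator_le_sum_of_block_average_ge (fun k => φ (T^[k] x)) ε L {k | T^[k] x ∈ E L}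
        (fun k ⟨l, hl, hl'⟩ => ⟨l, hl.1, hl.2, by
          simpa only [← Function.iterate_add_apply, add_comm] using hl'.le⟩) n 0
    simp only [zero_add] at h2
    rw [lintegral_sum_iterate hT hφ] at h2
    have h3 := lintegral_sum_iterate hT (φ := (E L).indicator fun _ => ε)
      (measurable_const.indicator (hEm L)) n
    rw [lintegral_indicator_const (hEm L)] at h3
    rw [← h3, ← add_mul, ← Nat.cast_add]
    exact h2
  refine ENNReal.le_of_forall_pos_le_add fun δ hδ _ => ?_
  obtain ⟨n, hn⟩ := ENNReal.exists_nat_mul_gt (a := (δ : ℝ≥0∞)) (by simpa using hδ.ne')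
    (ENNReal.mul_ne_top (ENNReal.natCast_ne_top L) hI)
  have hn0 : n ≠ 0 := by rintro rfl; simp at hn
  have := (key n).trans (add_le_add le_rfl hn.le)
  rw [← mul_add] at this
  exact (ENNReal.mul_le_mul_iff_right (by simpa using hn0) (ENNReal.natCast_ne_top n)).1 this

/-- A subadditive process over `T` with values in `EReal`, whose first term has an integrable
positive part. -/
structure IsSubadditiveProcess (ν : Measure X) (T : X → X) (g : ℕ → X → EReal) : Prop where
  measurable : ∀ n, Measurable (g n)
  zero_le : ∀ x, g 0 x ≤ 0
  subadd : ∀ m n x, g (m + n) x ≤ g m x + g n (T^[m] x)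
  lintegral_ne_top : ∫⁻ x, (g 1 x).toENNReal ∂ν ≠ ∞

namespace IsSubadditiveProcess

variable {g : ℕ → X → EReal}

theorem sub_linear [IsFiniteMeasure ν] (hg : IsSubadditiveProcess ν T g) (M : ℝ) :
    IsSubadditiveProcess ν T fun n x => g n x + ((-(M * n) : ℝ) : EReal) where
  measurable n := (hg.measurable n).add_const _
  zero_le x := by simpa using hg.zero_le x
  subadd m n x := by
    have : ((-(M * (m + n : ℕ)) : ℝ) : EReal)
        = ((-(M * m) : ℝ) : EReal) + ((-(M * n) : ℝ) : EReal) := by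
      rw [← EReal.coe_add, EReal.coe_eq_coe_iff, Nat.cast_add]
      ring
    rw [this, add_add_add_comm]
    gcongr
    exact hg.subadd m n x
  lintegral_ne_top := by
    have hle : ∀ x, (g 1 x + ((-(M * (1 : ℕ)) : ℝ) : EReal)).toENNReal
        ≤ (g 1 x).toENNReal + ENNReal.ofReal (-M) := fun x => by
      simpa using EReal.toENNReal_add_le (x := g 1 x) (y := ((-M : ℝ) : EReal))
    refine ne_top_of_le_ne_top ?_ (lintegral_mono hle)
    rw [lintegral_add_right _ measurable_const]
    simpa using ⟨hg.lintegral_ne_top, ENNReal.mul_ne_top (by simp) (by simp)⟩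

theorem iterate_zero_le (hg : IsSubadditiveProcess ν T g) (x : X) (k : ℕ) : g 0 (T^[k] x) ≤ 0 :=
  hg.zero_le _

theorem iterate_subadd (hg : IsSubadditiveProcess ν T g) (x : X) (k l m : ℕ) :
    g (l + m) (T^[k] x) ≤ g l (T^[k] x) + g m (T^[k + l] x) := by
  rw [add_comm k l, Function.iterate_add_apply]
  exact hg.subadd l m _

theorem ae_toENNReal_ne_top (hg : IsSubadditiveProcess ν T g) :
    ∀ᵐ x ∂ν, (g 1 x).toENNReal ≠ ∞ := by
  filter_upwards [ae_lt_top (hg.measurable 1).ereal_toENNReal hg.lintegral_ne_top] with x hx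
  exact hx.ne

/-- If almost every orbit has a block of nonpositive cost, then the process grows at most
linearly with arbitrarily small slope. -/
theorem ae_eventually_le_of_ae_exists_nonpos [IsFiniteMeasure ν] (hT : MeasurePreserving T ν ν)
    (hg : IsSubadditiveProcess ν T g) (hneg : ∀ᵐ x ∂ν, ∃ l, 1 ≤ l ∧ g l x ≤ 0)
    {ε : ℝ≥0∞} (hε : ε ≠ 0) :
    ∀ᵐ x ∂ν, ∀ᶠ n : ℕ in atTop, g n x ≤ ((ε * n : ℝ≥0∞) : EReal) := by
  set h : X → ℝ≥0∞ := fun x => (g 1 x).toENNReal with hh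
  have hhm : Measurable h := (hg.measurable 1).ereal_toENNReal
  set B : ℕ → Set X := fun N => {x | ∀ l, 1 ≤ l → l ≤ N → 0 < g l x} ∪ {x | (N : ℝ≥0∞) < h x}
    with hB
  have hBm : ∀ N, MeasurableSet (B N) := fun N => by
    refine .union ?_ (measurableSet_lt measurable_const hhm)
    have : {x | ∀ l, 1 ≤ l → l ≤ N → 0 < g l x}
        = ⋂ (l) (_ : 1 ≤ l) (_ : l ≤ N), {x | 0 < g l x} := by ext; simp
    rw [this]
    exact .iInter fun l => .iInter fun _ => .iInter fun _ =>
      measurableSet_lt measurable_const (hg.measurable l)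
  have hanti : Antitone B := fun N N' hN => Set.union_subset_union
    (fun x hx l h1 h2 => hx l h1 (h2.trans hN))
    (fun x (hx : (N' : ℝ≥0∞) < h x) => (Nat.cast_le.2 hN).trans_lt hx)
  have hBnull : ν (⋂ N, B N) = 0 := by
    rw [measure_eq_zero_iff_ae_notMem]
    filter_upwards [hneg, hg.ae_toENNReal_ne_top] with x ⟨l, hl, hgl⟩ hx hmem
    obtain ⟨m, hm⟩ := ENNReal.exists_nat_gt hx
    rcases Set.mem_iInter.1 hmem (max l m) with h1 | h1
    · exact (h1 l hl (le_max_left _ _)).not_ge hgl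
    · refine lt_asymm hm (lt_of_le_of_lt ?_ h1)
      exact_mod_cast le_max_right l m
  have hlim : Tendsto (fun N => ∫⁻ x in B N, h x ∂ν) atTop (𝓝 0) := by
    refine tendsto_setLIntegral_zero hg.lintegral_ne_top ?_
    rw [← hBnull]
    exact tendsto_measure_iInter_atTop (fun N => (hBm N).nullMeasurableSet) hanti
      ⟨0, measure_ne_top _ _⟩
  have hε2 : ε / 2 ≠ 0 := by simpa using hε
  have hbad : ∀ N : ℕ, ε / 2 * ν {x | ¬ ∀ᶠ n : ℕ in atTop, g n x ≤ ((ε * n : ℝ≥0∞) : EReal)}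
      ≤ ∫⁻ x in B N, h x ∂ν := fun N => by
    rw [← lintegral_indicator (hBm N)]
    refine le_trans ?_ (mul_measure_exists_average_gt_le_lintegral hT
      (hhm.indicator (hBm N)) (ε / 2))
    refine mul_le_mul_right (measure_mono fun x hx => ?_) _
    by_contra hcon
    simp only [Set.mem_ofPred_eq, not_exists, not_and, not_lt] at hcon
    refine hx ?_
    obtain ⟨m, hm⟩ := ENNReal.exists_nat_mul_gt hε2 (b := (N * N : ℝ≥0∞)) (by finiteness)
    filter_upwards [eventually_ge_atTop (max 1 m)] with n hn
    have hcover := subadditive_le_of_cover (G := fun k n => g n (T^[k] x))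
      (h := fun k => h (T^[k] x)) (φ := fun k => (B N).indicator h (T^[k] x)) (K := N) (N := N)
      (A := {k | T^[k] x ∈ B N}) (hg.iterate_zero_le x) (hg.iterate_subadd x)
      (fun k => le_coe_toENNReal _) (fun k (hk : T^[k] x ∈ B N) => by rw [Set.indicator_of_mem hk])
      (fun k => by
        by_cases hk : T^[k] x ∈ B N
        · rw [Set.indicator_of_mem hk]; exact le_add_self
        · have := fun h' => hk (Or.inr h')
          exact (not_lt.1 this).trans le_self_add)
      (fun k hk => by
        have := fun h' => hk (Or.inl h')
        simpa using this) n 0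
    refine hcover.trans (EReal.coe_ennreal_le_coe_ennreal_iff.2 ?_)
    simp only [zero_add]
    calc (N * N : ℝ≥0∞) + ∑ i ∈ Finset.range n, (B N).indicator h (T^[i] x)
        ≤ n * (ε / 2) + ε / 2 * n := by
          refine add_le_add (hm.le.trans ?_) (hcon n (le_of_max_le_left hn))
          gcongr
          exact le_of_max_le_right hn
      _ = ε * n := by rw [mul_comm, ← add_mul, ENNReal.add_halves]
  have := ge_of_tendsto' hlim hbad
  rw [nonpos_iff_eq_zero, mul_eq_zero, or_iff_right hε2] at this
  exact this

/-- The points at which the lower growth rate of `g` is less than `M`. -/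
def lowerRateLT (g : ℕ → X → EReal) (M : ℝ) : Set X :=
  {x | ∃ q : ℚ, (q : ℝ) < M ∧ ∃ᶠ n : ℕ in atTop, g n x ≤ ((q * n : ℝ) : EReal)}

theorem measurableSet_lowerRateLT (hg : IsSubadditiveProcess ν T g) (M : ℝ) :
    MeasurableSet (lowerRateLT g M) := by
  have : lowerRateLT g M = ⋃ (q : ℚ) (_ : (q : ℝ) < M), ⋂ m : ℕ, ⋃ (n : ℕ) (_ : m ≤ n),
      {x | g n x ≤ ((q * n : ℝ) : EReal)} := by
    ext x; simp [lowerRateLT, frequently_atTop]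
  rw [this]
  exact .iUnion fun q => .iUnion fun _ => .iInter fun m => .iUnion fun n => .iUnion fun _ =>
    measurableSet_le (hg.measurable n) measurable_const

theorem preimage_lowerRateLT_ae_le (hg : IsSubadditiveProcess ν T g) (M : ℝ) :
    T ⁻¹' lowerRateLT g M ≤ᵐ[ν] lowerRateLT g M := by
  filter_upwards [hg.ae_toENNReal_ne_top] with x hx ⟨q, hq, hfreq⟩
  obtain ⟨q', hq', hq'M⟩ := exists_rat_btwn hq
  refine ⟨q', hq'M, (tendsto_add_atTop_nat 1).frequently ?_⟩
  set r := (g 1 x).toENNReal.toReal with hr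
  have h1 : g 1 x ≤ (r : EReal) := by
    rw [hr, EReal.coe_ennreal_toReal hx]
    exact le_coe_toENNReal _
  obtain ⟨m, hm⟩ := exists_nat_gt ((r - q') / (q' - q))
  refine (hfreq.and_eventually (eventually_ge_atTop m)).mono fun n ⟨hn, hmn⟩ => ?_
  rw [add_comm n 1]
  refine (hg.subadd 1 n x).trans ((add_le_add h1 hn).trans ?_)
  rw [← EReal.coe_add, EReal.coe_le_coe_iff]
  rw [div_lt_iff₀ (by linarith)] at hm
  have : (m : ℝ) ≤ n := by exact_mod_cast hmn
  have := mul_le_mul_of_nonneg_right this (sub_pos.2 hq').le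
  push_cast
  nlinarith

theorem lowerRateLT_zero_one [IsFiniteMeasure ν] (hT : Ergodic T ν)
    (hg : IsSubadditiveProcess ν T g) (M : ℝ) :
    (∀ᵐ x ∂ν, x ∉ lowerRateLT g M) ∨ ∀ᵐ x ∂ν, x ∈ lowerRateLT g M := by
  refine (hT.ae_empty_or_univ_of_preimage_ae_le (hg.measurableSet_lowerRateLT M).nullMeasurableSet
    (hg.preimage_lowerRateLT_ae_le M)).imp (fun h => ?_) (fun h => ?_)
  · exact measure_eq_zero_iff_ae_notMem.1 (ae_eq_empty.1 h)
  · exact eventuallyEq_univ.1 h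

theorem exists_ae_mem_lowerRateLT [IsProbabilityMeasure ν] (hT : Ergodic T ν)
    (hg : IsSubadditiveProcess ν T g) : ∃ M, ∀ᵐ x ∂ν, x ∈ lowerRateLT g M := by
  obtain ⟨m, hm⟩ := ENNReal.exists_nat_gt hg.lintegral_ne_top
  refine ⟨m + 1, (hg.lowerRateLT_zero_one hT _).resolve_left fun hnot => ?_⟩
  have hmax := mul_measure_exists_average_gt_le_lintegral hT.toMeasurePreserving
    (hg.measurable 1).ereal_toENNReal m
  refine hm.not_ge (le_trans ?_ hmax)
  rw [measure_congr (eventuallyEq_univ.2 ?_), measure_univ, mul_one]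
  filter_upwards [hnot] with x hx
  by_contra hcon
  simp only [not_exists, not_and, not_lt] at hcon
  refine hx ⟨m, by simp, Eventually.frequently ?_⟩
  filter_upwards [eventually_ge_atTop 1] with n hn
  refine (subadditive_le_sum (G := fun k n => g n (T^[k] x)) (hg.iterate_zero_le x)
    (hg.iterate_subadd x) (fun k => le_coe_toENNReal _) n 0).trans ?_
  simp only [zero_add]
  refine (EReal.coe_ennreal_le_coe_ennreal_iff.2 (hcon n hn)).trans (le_of_eq ?_)
  rw [← Nat.cast_mul, ← ENNReal.ofReal_natCast, EReal.coe_ennreal_ofReal,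
    max_eq_left (Nat.cast_nonneg _), EReal.coe_eq_coe_iff]
  push_cast
  rfl

theorem ae_eventually_le_of_ae_mem_lowerRateLT [IsFiniteMeasure ν] (hT : MeasurePreserving T ν ν)
    (hg : IsSubadditiveProcess ν T g) {M M' : ℝ} (hM : ∀ᵐ x ∂ν, x ∈ lowerRateLT g M)
    (hMM' : M < M') : ∀ᵐ x ∂ν, ∀ᶠ n : ℕ in atTop, g n x ≤ ((M' * n : ℝ) : EReal) := by
  have hε : 0 < M' - M := sub_pos.2 hMM'
  have cancel : ∀ (n : ℕ) (a : EReal) (b : ℝ),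
      a + ((-(M * n) : ℝ) : EReal) ≤ b ↔ a ≤ ((b + M * n : ℝ) : EReal) := fun n a b => by
    induction a with
    | bot => simp
    | top =>
      rw [EReal.top_add_coe]
      simp only [top_le_iff, EReal.coe_ne_top]
    | coe a => norm_cast; constructor <;> intro h <;> linarith
  have := (hg.sub_linear M).ae_eventually_le_of_ae_exists_nonpos hT (by
    filter_upwards [hM] with x ⟨q, hq, hx⟩
    obtain ⟨n, hn, hn1⟩ := (hx.and_eventually (eventually_ge_atTop 1)).exists
    refine ⟨n, hn1, ?_⟩
    rw [← EReal.coe_zero, cancel, zero_add]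
    refine hn.trans (EReal.coe_le_coe_iff.2 ?_)
    gcongr) (ε := ENNReal.ofReal (M' - M)) (by simpa using hε)
  filter_upwards [this] with x hx
  filter_upwards [hx] with n hn
  have hcoe : ((ENNReal.ofReal (M' - M) * n : ℝ≥0∞) : EReal) = (((M' - M) * n : ℝ) : EReal) := by
    rw [← ENNReal.ofReal_natCast, ← ENNReal.ofReal_mul hε.le, EReal.coe_ennreal_ofReal,
      max_eq_left (by positivity)]
  rw [hcoe, cancel] at hn
  convert hn using 2
  ring

/-- **Kingman's subadditive ergodic theorem** for an ergodic map and an `EReal`-valued process. -/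
theorem exists_ae_tendsto_div [IsProbabilityMeasure ν] (hT : Ergodic T ν)
    (hg : IsSubadditiveProcess ν T g) :
    ∃ c : EReal, c ≠ ⊤ ∧ ∀ᵐ x ∂ν, Tendsto (fun n : ℕ => g n x / (n : EReal)) atTop (𝓝 c) := by
  set R : Set EReal := Set.image Real.toEReal {M | ∀ᵐ x ∂ν, x ∈ lowerRateLT g M}
  refine ⟨sInf R, ?_, ?_⟩
  · obtain ⟨M, hM⟩ := hg.exists_ae_mem_lowerRateLT hT
    exact ((sInf_le (show (M : EReal) ∈ R from ⟨M, hM, rfl⟩)).trans_lt (EReal.coe_lt_top M)).ne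
  have hup : ∀ q : ℚ, sInf R < ((q : ℝ) : EReal) →
      ∀ᵐ x ∂ν, ∀ᶠ n : ℕ in atTop, g n x ≤ ((q * n : ℝ) : EReal) := fun q hq => by
    obtain ⟨_, ⟨M, hM, rfl⟩, hMq⟩ := sInf_lt_iff.1 hq
    exact hg.ae_eventually_le_of_ae_mem_lowerRateLT hT.toMeasurePreserving hM
      (EReal.coe_lt_coe_iff.1 hMq)
  have hlow : ∀ q : ℚ, ((q : ℝ) : EReal) < sInf R →
      ∀ᵐ x ∂ν, ∀ᶠ n : ℕ in atTop, ((q * n : ℝ) : EReal) < g n x := fun q hq => by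
    obtain ⟨M, hqM, hM⟩ := EReal.lt_iff_exists_real_btwn.1 hq
    have hnot : ¬ ∀ᵐ x ∂ν, x ∈ lowerRateLT g M := fun h =>
      hM.not_ge (sInf_le ⟨M, h, rfl⟩)
    filter_upwards [(hg.lowerRateLT_zero_one hT M).resolve_right hnot] with x hx
    by_contra hcon
    refine hx ⟨q, EReal.coe_lt_coe_iff.1 hqM, ?_⟩
    simpa only [not_eventually, not_lt] using hcon
  filter_upwards [ae_all_iff.2 fun q => ae_all_iff.2 (hup q),
    ae_all_iff.2 fun q => ae_all_iff.2 (hlow q)] with x hxup hxlow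
  have hpos : ∀ n : ℕ, 1 ≤ n → (0 : EReal) < n := fun n hn => by exact_mod_cast hn
  refine tendsto_order.2 ⟨fun a ha => ?_, fun a ha => ?_⟩
  · obtain ⟨q, haq, hq⟩ := EReal.lt_iff_exists_rat_btwn.1 ha
    filter_upwards [hxlow q hq, eventually_ge_atTop 1] with n hn hn1
    refine haq.trans ((EReal.lt_div_iff (hpos n hn1) (EReal.natCast_ne_top n)).2 ?_)
    exact_mod_cast hn
  · obtain ⟨q, hq, hqa⟩ := EReal.lt_iff_exists_rat_btwn.1 ha
    filter_upwards [hxup q hq, eventually_ge_atTop 1] with n hn hn1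
    refine lt_of_le_of_lt ((EReal.div_le_iff_le_mul (hpos n hn1) (EReal.natCast_ne_top n)).2 ?_) hqa
    rw [mul_comm]
    exact_mod_cast hn

end IsSubadditiveProcess

end SubadditiveErgodic

section MaxPlus

variable {d : ℕ}

theorem mpVec_mono (A : Fin d → Fin d → EReal) : Monotone (mpVec A) := fun _ _ h _ =>
  iSup_mono fun j => add_le_add le_rfl (h j)

theorem mpVec_add_const_le (A : Fin d → Fin d → EReal) (v : Fin d → EReal) (s : EReal) :
    mpVec A (fun i => v i + s) ≤ fun i => mpVec A v i + s := fun i =>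
  iSup_le fun j => by
    rw [← add_assoc]
    exact add_le_add (le_iSup (fun j => A i j + v j) j) le_rfl

theorem mpApply_mono (A : ℤ → Fin d → Fin d → EReal) (m : ℤ) (n : ℕ) :
    Monotone fun v => mpApply A m v n := by
  induction n with
  | zero => exact monotone_id
  | succ n ih => exact (mpVec_mono _).comp ih

theorem mpApply_add_const_le (A : ℤ → Fin d → Fin d → EReal) (m : ℤ) (v : Fin d → EReal)
    (s : EReal) (n : ℕ) : mpApply A m (fun i => v i + s) n ≤ fun i => mpApply A m v n i + s := by
  induction n with
  | zero => exact le_rfl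
  | succ n ih => exact (mpVec_mono _ ih).trans (mpVec_add_const_le _ _ _)

theorem mpApply_add (A : ℤ → Fin d → Fin d → EReal) (m : ℤ) (v : Fin d → EReal) (n k : ℕ) :
    mpApply A m v (n + k) = mpApply A (m + n) (mpApply A m v n) k := by
  induction k with
  | zero => rfl
  | succ k ih =>
    rw [← add_assoc, mpApply, mpApply, ih]
    push_cast
    rw [add_assoc m]

theorem mpApply_translate (A : ℤ → Fin d → Fin d → EReal) (m k : ℤ) (v : Fin d → EReal) (n : ℕ) :
    mpApply A (m + k) v n = mpApply (fun j => A (j + k)) m v n := by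
  induction n with
  | zero => rfl
  | succ n ih => rw [mpApply, mpApply, ih, add_right_comm]

theorem measurable_mpApply (m : ℤ) (v : Fin d → EReal) (n : ℕ) (i : Fin d) :
    Measurable fun A : ℤ → Fin d → Fin d → EReal => mpApply A m v n i := by
  induction n generalizing i with
  | zero => exact measurable_const
  | succ n ih =>
    refine .iSup fun j => .add ?_ (ih j)
    exact (measurable_pi_apply j).comp ((measurable_pi_apply i).comp (measurable_pi_apply _))

/-- The largest entry of `A(m+n-1) ⊗ ⋯ ⊗ A(m) ⊗ 0`. -/
noncomputable def mpMax (A : ℤ → Fin d → Fin d → EReal) (m : ℤ) (n : ℕ) : EReal :=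
  ⨆ i, mpApply A m (fun _ => 0) n i

theorem mpMax_add_le (A : ℤ → Fin d → Fin d → EReal) (m : ℤ) (n k : ℕ) :
    mpMax A m (n + k) ≤ mpMax A m n + mpMax A (m + n) k := by
  refine iSup_le fun i => ?_
  rw [mpApply_add, add_comm (mpMax A m n)]
  have h : mpApply A m (fun _ => 0) n ≤ fun _ => 0 + mpMax A m n := fun j => by
    rw [zero_add]
    exact le_iSup (mpApply A m (fun _ => 0) n) j
  refine ((mpApply_mono A (m + n) k h).trans (mpApply_add_const_le A _ _ _ k) i).trans ?_
  exact add_le_add (le_iSup (mpApply A (m + n) (fun _ => 0) k) i) le_rfl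

theorem mpMax_zero_le (A : ℤ → Fin d → Fin d → EReal) (m : ℤ) : mpMax A m 0 ≤ 0 :=
  iSup_le fun _ => le_rfl

theorem mpMax_one (A : ℤ → Fin d → Fin d → EReal) (m : ℤ) :
    mpMax A m 1 = ⨆ i, ⨆ j, A m i j := by
  simp [mpMax, mpApply, mpVec]

theorem mpMax_translate (A : ℤ → Fin d → Fin d → EReal) (m k : ℤ) (n : ℕ) :
    mpMax A (m + k) n = mpMax (fun j => A (j + k)) m n := by
  simp only [mpMax, mpApply_translate]

theorem measurable_mpMax (m : ℤ) (n : ℕ) :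
    Measurable fun A : ℤ → Fin d → Fin d → EReal => mpMax A m n :=
  .iSup fun i => measurable_mpApply m _ n i

theorem measurable_mpMax_div (m : ℤ) (n : ℕ) :
    Measurable fun A : ℤ → Fin d → Fin d → EReal => mpMax A m n / (n : EReal) :=
  (measurable_mpMax m n).mul_const (n : EReal)⁻¹

end MaxPlus

section Shift

variable {E : Type*} [MeasurableSpace E]

/-- The shift on two-sided sequences, as a measurable equivalence. -/
def seqShiftEquiv (E : Type*) [MeasurableSpace E] : (ℤ → E) ≃ᵐ (ℤ → E) where
  toFun := seqShift
  invFun u n := u (n - 1)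
  left_inv u := by ext n; simp [seqShift]
  right_inv u := by ext n; simp [seqShift]
  measurable_toFun := measurable_pi_lambda _ fun n => measurable_pi_apply (n + 1)
  measurable_invFun := measurable_pi_lambda _ fun n => measurable_pi_apply (n - 1)

theorem seqShiftEquiv_iterate (u : ℤ → E) (k : ℕ) :
    (seqShiftEquiv E)^[k] u = fun n => u (n + k) := by
  induction k with
  | zero => simp
  | succ k ih =>
    rw [Function.iterate_succ_apply', ih]
    funext n
    change u (n + 1 + k) = _
    congr 1
    push_cast
    ring

theorem seqShiftEquiv_symm_iterate (u : ℤ → E) (k : ℕ) :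
    (seqShiftEquiv E).symm^[k] u = fun n => u (n + -k) := by
  induction k with
  | zero => simp
  | succ k ih =>
    rw [Function.iterate_succ_apply', ih]
    funext n
    change u (n - 1 + -k) = _
    congr 1
    push_cast
    ring

end Shift

/-- Sequences of random variables with the same marginal laws cannot converge almost surely to
different constants. -/
theorem le_of_ae_tendsto_of_measure_lt_eq {X : Type*} [MeasurableSpace X] {ν : Measure X}
    [IsProbabilityMeasure ν] {f f' : ℕ → X → EReal} (hf : ∀ n, Measurable (f n))
    (hf' : ∀ n, Measurable (f' n)) (hlaw : ∀ n M, ν {x | f n x < M} = ν {x | f' n x < M})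
    {c c' : EReal} (hc : ∀ᵐ x ∂ν, Tendsto (fun n => f n x) atTop (𝓝 c))
    (hc' : ∀ᵐ x ∂ν, Tendsto (fun n => f' n x) atTop (𝓝 c')) : c' ≤ c := by
  by_contra! hlt
  obtain ⟨M, hcM, hMc⟩ := exists_between hlt
  have h1 : Tendsto (fun n => ν {x | f n x < M}) atTop (𝓝 (ν Set.univ)) :=
    tendsto_measure_of_ae_tendsto_indicator_of_isFiniteMeasure _ .univ
      (fun n => measurableSet_lt (hf n) measurable_const) <| by
      filter_upwards [hc] with x hx
      filter_upwards [hx.eventually_lt_const hcM] with n hn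
      simpa using hn
  have h2 : Tendsto (fun n => ν {x | f' n x < M}) atTop (𝓝 (ν ∅)) :=
    tendsto_measure_of_ae_tendsto_indicator_of_isFiniteMeasure _ .empty
      (fun n => measurableSet_lt (hf' n) measurable_const) <| by
      filter_upwards [hc'] with x hx
      filter_upwards [hx.eventually_const_lt hMc] with n hn
      simpa using hn.le
  simp only [hlaw] at h1
  simpa using tendsto_nhds_unique h1 h2

section Processes

variable {d : ℕ} {ν : Measure (ℤ → Fin d → Fin d → EReal)}

theorem isSubadditiveProcess_mpMax
    (hint : ∫⁻ u, (mpMax u 0 1).toENNReal ∂ν ≠ ∞) :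
    IsSubadditiveProcess ν (seqShiftEquiv _) fun n u => mpMax u 0 n where
  measurable := measurable_mpMax 0
  zero_le u := mpMax_zero_le u 0
  subadd m n u := by
    rw [seqShiftEquiv_iterate, ← mpMax_translate]
    exact mpMax_add_le u 0 m n
  lintegral_ne_top := hint

theorem isSubadditiveProcess_mpMax_neg
    (hT : MeasurePreserving (seqShiftEquiv (Fin d → Fin d → EReal)) ν ν)
    (hint : ∫⁻ u, (mpMax u 0 1).toENNReal ∂ν ≠ ∞) :
    IsSubadditiveProcess ν (seqShiftEquiv _).symm fun n u => mpMax u (-n) n where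
  measurable n := measurable_mpMax (-n) n
  zero_le u := mpMax_zero_le u _
  subadd m n u := by
    rw [seqShiftEquiv_symm_iterate, ← mpMax_translate, add_comm m n, add_comm (mpMax u _ m)]
    convert mpMax_add_le u (-n + -m) n m using 2
    · push_cast; ring
    · rw [neg_add_cancel_comm]
  lintegral_ne_top := by
    rw [← hT.symm.lintegral_comp (measurable_mpMax 0 1).ereal_toENNReal] at hint
    convert hint using 4 with u
    rw [← zero_add (-((1 : ℕ) : ℤ)), mpMax_translate]
    exact congrArg (fun w => mpMax w 0 1) (seqShiftEquiv_symm_iterate u 1).symm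

theorem measure_mpMax_neg_div_lt
    (hT : MeasurePreserving (seqShiftEquiv (Fin d → Fin d → EReal)) ν ν) (n : ℕ) (M : EReal) :
    ν {u | mpMax u (-n) n / (n : EReal) < M} = ν {u | mpMax u 0 n / (n : EReal) < M} := by
  have hm : MeasurableSet {u : ℤ → Fin d → Fin d → EReal | mpMax u 0 n / (n : EReal) < M} :=
    measurableSet_lt (measurable_mpMax_div 0 n) measurable_const
  rw [← (hT.symm.iterate n).measure_preimage hm.nullMeasurableSet]
  congr 1 with u
  simp only [Set.mem_preimage, Set.mem_ofPred_eq]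
  rw [seqShiftEquiv_symm_iterate, ← mpMax_translate, zero_add]

end Processes

theorem maximal_lyapunov_exponent_exists
    {d : ℕ} {Ω : Type*} [MeasurableSpace Ω] (μ : Measure Ω) [IsProbabilityMeasure μ]
    (A : ℤ → Ω → Fin d → Fin d → EReal)
    (hA : IsStationaryErgodic A μ)
    (hnotop : ∀ n ω i j, A n ω i j ≠ ⊤)
    (hint : Integrable (fun ω => (max (⨆ i, ⨆ j, A 0 ω i j) 0).toReal) μ) :
    ∃ γ : EReal, γ ≠ ⊤ ∧
      (∀ᵐ ω ∂μ, Tendsto (fun n : ℕ => (⨆ i, xVec (fun k => A k ω) n i) / (n : EReal))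
        atTop (𝓝 γ)) ∧
      (∀ᵐ ω ∂μ, Tendsto (fun n : ℕ => (⨆ i, yVec (fun k => A k ω) n i) / (n : EReal))
        atTop (𝓝 γ)) := by
  obtain ⟨hmeas, herg⟩ := hA
  have hpath : Measurable fun ω n => A n ω := measurable_pi_lambda _ hmeas
  set ν := μ.map fun ω n => A n ω with hν
  have : IsProbabilityMeasure ν := Measure.isProbabilityMeasure_map hpath.aemeasurable
  have hT : Ergodic (seqShiftEquiv (Fin d → Fin d → EReal)) ν := herg
  have hI : ∫⁻ u, (mpMax u 0 1).toENNReal ∂ν ≠ ∞ := by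
    rw [hν, lintegral_map (measurable_mpMax 0 1).ereal_toENNReal hpath]
    refine ne_top_of_le_ne_top hint.lintegral_lt_top.ne (lintegral_mono fun ω => ?_)
    have htop : max (⨆ i, ⨆ j, A 0 ω i j) 0 ≠ ⊤ := by
      have h1 : ∀ {f : Fin d → EReal}, (∀ i, f i < ⊤) → ⨆ i, f i < ⊤ := fun {f} hf => by
        rw [← Finset.sup_univ_eq_iSup]
        exact (Finset.sup_lt_iff bot_lt_top).2 fun i _ => hf i
      exact (max_lt (h1 fun i => h1 fun j => (hnotop 0 ω i j).lt_top) EReal.zero_lt_top).ne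
    rw [mpMax_one, ← EReal.toENNReal_of_ne_top htop]
    exact EReal.toENNReal_le_toENNReal (le_max_left _ _)
  obtain ⟨c, hc, hcx⟩ := (isSubadditiveProcess_mpMax hI).exists_ae_tendsto_div hT
  obtain ⟨c', -, hcy⟩ :=
    (isSubadditiveProcess_mpMax_neg hT.toMeasurePreserving hI).exists_ae_tendsto_div hT.symm
  have hx := measurable_mpMax_div (d := d) 0
  have hy := fun n : ℕ => measurable_mpMax_div (d := d) (-n) n
  have hlaw := measure_mpMax_neg_div_lt hT.toMeasurePreserving
  obtain rfl : c = c' := le_antisymm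
    (le_of_ae_tendsto_of_measure_lt_eq hy hx hlaw hcy hcx)
    (le_of_ae_tendsto_of_measure_lt_eq hx hy (fun n M => (hlaw n M).symm) hcx hcy)
  exact ⟨c, hc, ae_of_ae_map hpath.aemeasurable hcx, ae_of_ae_map hpath.aemeasurable hcy⟩
end

section
/- Let $\mathbb{R}_{\max}=\mathbb{R}\cup\{-\infty\}$, and for a $d\times d$ matrix $M$ over $\mathbb{R}_{\max}$ and a vector $v$ write $(M\otimes v)_i=\max_j(M_{ij}+v_j)$. Let $(A(n))_{n\in\mathbb{Z}}$ be a stationary and ergodic sequence of random $d\times d$ matrices with entries in $\mathbb{R}_{\max}$, almost surely having at least one finite entry on each row, such that the positive part of $\max_{ij}A_{ij}(0)$ is integrable. Put $y(n,0)=A(-1)\otimes\cdots\otimes A(-n)\otimes 0$, where $0$ is the zero vector. For a set $s$ of indices, let $\gamma(A^{(s)})\in\mathbb{R}_{\max}$ be the maximal Lyapunov exponent of the submatrices $A^{(s)}(n)=(A_{ij}(n))_{i,j\in s}$, that is, the almost-sure (constant) limit of $\frac1n\max_{i\in s}\bigl(A^{(s)}(n-1)\otimes\cdots\otimes A^{(s)}(0)\otimes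 0\bigr)_i$. Let $\mathcal{G}(A)$ be the directed graph on $\{1,\dots,d\}$ with an arc $(i,j)$ whenever $\mathbb{P}(A_{ij}(0)\neq-\infty)>0$; its strongly connected components are the classes of mutually reachable nodes (a node on no circuit is alone in its component). Write $\to$ for reachability in $\mathcal{G}(A)$ by a path, possibly of length zero, between nodes or components. For a strongly connected component $c$ let $\gamma^{(c)}=\gamma(A^{(c)})$, $\gamma^{[c]}=\max\{\gamma^{(\tilde c)}: c\to\tilde c\}$, and $$H_c=\{i : \text{there is a strongly connected component } \tilde c \text{ with } c\to i\to\tilde c \text{ and } \gamma^{(\tilde c)}=\gamma^{[c]}\}.$$ If $\frac1n\,y(n,0)$ converges almost surely to a deterministic vector (entries $-\infty$ being allowed in the limit), then for every strongly connected component $c$ of $\mathcal{G}(A)$, the submatrix $A^{\{c\}}=(A_{ij}(0))_{i,j\in H_c}$ almost surely has at least one finite entry on each row. -/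
open Filter MeasureTheory Topology

noncomputable section

namespace MaxPlus

/-- A square matrix indexed by `ι` over `ℝ_max = ℝ ∪ {-∞}`. The semiring is realised inside `EReal`,
with `⊥ = -∞`; the theorem assumes that the value `⊤` is not taken. -/
abbrev Mat (ι : Type*) := ι → ι → EReal

/-- Max-plus product of a matrix and a vector: `(M ⊗ v)_i = max_j (M_ij + v_j)`. -/
def mulVec {ι : Type*} (M : Mat ι) (v : ι → EReal) : ι → EReal :=
  fun i => ⨆ j, M i j + v j

/-- `applyProd n f v = f 0 ⊗ f 1 ⊗ ⋯ ⊗ f (n-1) ⊗ v`. -/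
def applyProd {ι : Type*} : ℕ → (ℕ → Mat ι) → (ι → EReal) → ι → EReal
  | 0, _, v => v
  | n + 1, f, v => mulVec (f 0) (applyProd n (fun k => f (k + 1)) v)

/-- `x(n, 0) = A(n-1) ⊗ ⋯ ⊗ A(0) ⊗ 0`. -/
def xvec {ι : Type*} (A : ℤ → Mat ι) : ℕ → ι → EReal
  | 0 => fun _ => 0
  | n + 1 => mulVec (A n) (xvec A n)

/-- `y(n, 0) = A(-1) ⊗ A(-2) ⊗ ⋯ ⊗ A(-n) ⊗ 0`. -/
def yvec {ι : Type*} (A : ℤ → Mat ι) (n : ℕ) : ι → EReal :=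
  applyProd n (fun k => A (-((k : ℤ) + 1))) (fun _ => 0)

/-- `(1/n) x` for `x ∈ ℝ ∪ {-∞}`. -/
def scale (n : ℕ) (x : EReal) : EReal := (((n : ℝ)⁻¹ : ℝ) : EReal) * x

variable {Ω : Type*} [MeasurableSpace Ω]

/-- The sequence of random matrices `(A(n))_{n ∈ ℤ}` is stationary and ergodic: the shift preserves
the law of the whole two-sided sequence and is ergodic for it. -/
def IsStationaryErgodic {ι : Type*} (μ : Measure Ω) (A : ℤ → Ω → Mat ι) : Prop :=
  Ergodic (fun (f : ℤ → Mat ι) (n : ℤ) => f (n + 1)) (μ.map (fun ω n => A n ω))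

/-- `g` is the almost-sure limit of `(1/n) max_i x_i(n, 0)`. -/
def IsLyapunovExponent {ι : Type*} (μ : Measure Ω) (A : ℤ → Ω → Mat ι) (g : EReal) : Prop :=
  ∀ᵐ ω ∂μ, Tendsto (fun n : ℕ => scale n (⨆ i, xvec (fun m => A m ω) n i)) atTop (𝓝 g)

open Classical in
/-- The maximal Lyapunov exponent `γ(A)`: the constant which is the almost-sure limit of
`(1/n) max_i x_i(n, 0)` (with the irrelevant value `-∞` if there is no such constant). -/
def lyapunov {ι : Type*} (μ : Measure Ω) (A : ℤ → Ω → Mat ι) : EReal :=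
  if h : ∃ g, IsLyapunovExponent μ A g then h.choose else ⊥

theorem IsLyapunovExponent.lyapunov_eq {ι : Type*} {μ : Measure Ω} [IsProbabilityMeasure μ]
    {A : ℤ → Ω → Mat ι} {g : EReal} (hg : IsLyapunovExponent μ A g) : lyapunov μ A = g := by
  have h : ∃ g, IsLyapunovExponent μ A g := ⟨g, hg⟩
  have h' : IsLyapunovExponent μ A (lyapunov μ A) := by
    rw [lyapunov, dif_pos h]
    exact h.choose_spec
  obtain ⟨ω, h₁, h₂⟩ := (h'.and hg).exists
  exact tendsto_nhds_unique h₁ h₂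

/-- The arcs of the graph `𝒢(A)`: `(i, j)` is an arc iff `ℙ(A_ij(0) ≠ -∞) > 0`. -/
def Arc {ι : Type*} (μ : Measure Ω) (A : ℤ → Ω → Mat ι) (i j : ι) : Prop :=
  0 < μ {ω | A 0 ω i j ≠ ⊥}

/-- There is a path, possibly of length zero, from `i` to `j` in `𝒢(A)`. -/
def Reach {ι : Type*} (μ : Measure Ω) (A : ℤ → Ω → Mat ι) (i j : ι) : Prop :=
  Relation.ReflTransGen (Arc μ A) i j

/-- `c` is a strongly connected component of `𝒢(A)`, that is, a class of mutually reachable nodes;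
a node on no circuit is alone in its class. -/
def IsSCC {ι : Type*} (μ : Measure Ω) (A : ℤ → Ω → Mat ι) (c : Set ι) : Prop :=
  ∃ i, c = {j | Reach μ A i j ∧ Reach μ A j i}

/-- `c → c'` : some node of `c` reaches some node of `c'`. -/
def SetReach {ι : Type*} (μ : Measure Ω) (A : ℤ → Ω → Mat ι) (c c' : Set ι) : Prop :=
  ∃ i ∈ c, ∃ j ∈ c', Reach μ A i j

/-- The submatrices `(A_ij(n))_{i, j ∈ s}`. -/
def sub {ι : Type*} (A : ℤ → Ω → Mat ι) (s : Set ι) : ℤ → Ω → Mat s :=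
  fun n ω i j => A n ω i j

/-- `γ^{(c)} = γ(A^{(c)})`. -/
def gammaComp {ι : Type*} (μ : Measure Ω) (A : ℤ → Ω → Mat ι) (c : Set ι) : EReal :=
  lyapunov μ (sub A c)

/-- `γ^{[c]} = max {γ^{(c')} : c → c'}`, the maximum being over strongly connected components. -/
def gammaDown {ι : Type*} (μ : Measure Ω) (A : ℤ → Ω → Mat ι) (c : Set ι) : EReal :=
  ⨆ c' ∈ {c' : Set ι | IsSCC μ A c' ∧ SetReach μ A c c'}, gammaComp μ A c'

/-- `H_c`: the nodes `i` such that `c → i → c'` for some strongly connected component `c'` with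
`γ^{(c')} = γ^{[c]}`. -/
def H {ι : Type*} (μ : Measure Ω) (A : ℤ → Ω → Mat ι) (c : Set ι) : Set ι :=
  {i | ∃ c', IsSCC μ A c' ∧ SetReach μ A c {i} ∧ SetReach μ A {i} c' ∧
    gammaComp μ A c' = gammaDown μ A c}

/-- Every row of the matrix has an entry different from `-∞`. -/
def RowFinite {ι : Type*} (M : Mat ι) : Prop :=
  ∀ i, ∃ j, M i j ≠ ⊥

end MaxPlus

end

open scoped ENNReal

namespace MaxPlus

section ErgodicTheory

variable {Z : Type*} {T : Z → Z} {f : ℕ → Z → ℝ≥0∞}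

theorem le_birkhoffSum_of_subadditive (h0 : ∀ z, f 0 z = 0)
    (hsub : ∀ m n z, f (m + n) z ≤ f m z + f n (T^[m] z)) (n : ℕ) (z : Z) :
    f n z ≤ birkhoffSum T (f 1) n z := by
  induction n with
  | zero => simp [h0]
  | succ n ih =>
    rw [birkhoffSum_succ]
    exact (hsub n 1 z).trans (add_le_add_left ih _)

/-- If every point starts a tile of length at most `M` on which `f` is controlled by the Birkhoff
sums of `w`, then so is `f` on every interval, up to a boundary term. -/
theorem le_birkhoffSum_add_of_tiling {w : Z → ℝ≥0∞} {M : ℕ} (h0 : ∀ z, f 0 z = 0)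
    (hsub : ∀ m n z, f (m + n) z ≤ f m z + f n (T^[m] z))
    (hw : ∀ z, ∃ k, 1 ≤ k ∧ k ≤ M ∧ f k z ≤ birkhoffSum T w k z) (n : ℕ) (z : Z) :
    f n z ≤ birkhoffSum T w n z + ∑ k ∈ Finset.Ico (n - M) n, f 1 (T^[k] z) := by
  induction n using Nat.strong_induction_on generalizing z with
  | _ n ih =>
  rcases le_or_gt n M with hn | hn
  · rw [Nat.sub_eq_zero_of_le hn, ← Finset.range_eq_Ico]
    exact (le_birkhoffSum_of_subadditive h0 hsub n z).trans le_add_self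
  · obtain ⟨k, hk1, hkM, hk⟩ := hw z
    obtain ⟨m, rfl⟩ : ∃ m, n = k + m := ⟨n - k, by omega⟩
    refine (hsub k m z).trans ((add_le_add hk (ih m (by omega) _)).trans ?_)
    rw [birkhoffSum_add, add_assoc]
    gcongr
    have : ∑ j ∈ Finset.Ico (m - M) m, f 1 (T^[j] (T^[k] z)) =
        ∑ j ∈ Finset.Ico (m - M + k) (m + k), f 1 (T^[j] z) := by
      rw [← Finset.sum_Ico_add']
      simp only [Function.iterate_add_apply]
    rw [this]
    exact Finset.sum_le_sum_of_subset (Finset.Ico_subset_Ico (by omega) (by omega))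

theorem div_le_add_of_subadditive (hsub : ∀ m n z, f (m + n) z ≤ f m z + f n (T^[m] z))
    (n : ℕ) (z : Z) :
    f (n + 1) z / (n + 1 : ℕ) ≤ f n (T z) / n + f 1 z / (n + 1 : ℕ) := by
  have h : f (n + 1) z ≤ f 1 z + f n (T z) := by simpa [add_comm] using hsub 1 n z
  calc f (n + 1) z / (n + 1 : ℕ) ≤ (f 1 z + f n (T z)) / (n + 1 : ℕ) := by gcongr
    _ = f n (T z) / (n + 1 : ℕ) + f 1 z / (n + 1 : ℕ) := by rw [ENNReal.add_div, add_comm]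
    _ ≤ _ := by gcongr; omega

variable [MeasurableSpace Z] {ν : Measure Z}

theorem measurable_birkhoffSum (hT : Measurable T) {g : Z → ℝ≥0∞} (hg : Measurable g) (n : ℕ) :
    Measurable (birkhoffSum T g n) := by
  unfold birkhoffSum
  exact Finset.measurable_fun_sum _ fun k _ => hg.comp (hT.iterate k)

theorem lintegral_birkhoffSum (hT : MeasurePreserving T ν ν) {g : Z → ℝ≥0∞} (hg : Measurable g)
    (n : ℕ) : ∫⁻ z, birkhoffSum T g n z ∂ν = n * ∫⁻ z, g z ∂ν := by
  unfold birkhoffSum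
  rw [lintegral_finsetSum (f := fun k z => g (T^[k] z)) _
    fun k _ => hg.comp (hT.measurable.iterate k)]
  simp [(hT.iterate _).lintegral_comp hg]

theorem ergodic_ae_eq_const_of_le_comp [IsProbabilityMeasure ν] (hT : Ergodic T ν)
    {u : Z → ℝ≥0∞} (hu : Measurable u) (h : ∀ᵐ z ∂ν, u z ≤ u (T z)) : ∃ c, ∀ᵐ z ∂ν, u z = c := by
  have key : ∀ q, (∀ᵐ z ∂ν, u z ≤ q) ∨ ∀ᵐ z ∂ν, q < u z := by
    intro q
    have hm : MeasurableSet {z | q < u z} := measurableSet_lt measurable_const hu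
    rcases hT.ae_empty_or_univ_of_ae_le_preimage hm.nullMeasurableSet
      (by filter_upwards [h] with z hz (hq : q < u z); exact hq.trans_le hz)
      with h' | h'
    · left
      filter_upwards [ae_eq_empty.1 h' |> measure_eq_zero_iff_ae_notMem.1] with z hz
      exact not_lt.1 hz
    · right
      exact eventuallyEq_univ.1 h'
  refine ⟨essSup u ν, ?_⟩
  rcases eq_or_ne (essSup u ν) 0 with h0 | h0
  · filter_upwards [ae_le_essSup (f := u) (μ := ν)] with z hz
    rw [h0] at hz ⊢
    exact le_antisymm hz bot_le
  obtain ⟨q, -, hq, hlim⟩ := exists_seq_strictMono_tendsto' (bot_lt_iff_ne_bot.2 h0)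
  have : ∀ᵐ z ∂ν, ∀ n, q n < u z := by
    refine ae_all_iff.2 fun n => (key (q n)).resolve_left fun hn => ?_
    exact absurd (essSup_le_of_ae_le _ hn) (not_le.2 (hq n).2)
  filter_upwards [this, ae_le_essSup (f := u) (μ := ν)] with z hz hz'
  exact le_antisymm hz' (le_of_tendsto' hlim fun n => (hz n).le)

theorem tendsto_const_div_nat {C : ℝ≥0∞} (hC : C ≠ ∞) :
    Tendsto (fun n : ℕ => C / n) atTop (𝓝 0) := by
  simpa [div_eq_mul_inv] using
    ENNReal.Tendsto.const_mul ENNReal.tendsto_inv_nat_nhds_zero (Or.inr hC) (a := C)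

theorem limsup_div_ae_eq_const [IsProbabilityMeasure ν] (hT : Ergodic T ν)
    (hf : ∀ n, Measurable (f n)) (hsub : ∀ m n z, f (m + n) z ≤ f m z + f n (T^[m] z))
    (hint : ∫⁻ z, f 1 z ∂ν ≠ ∞) :
    ∃ c, ∀ᵐ z ∂ν, limsup (fun n : ℕ => f n z / n) atTop = c := by
  refine ergodic_ae_eq_const_of_le_comp hT (.limsup fun n => (hf n).div_const _) ?_
  filter_upwards [ae_lt_top (hf 1) hint] with z hz
  rw [← limsup_nat_add _ 1]
  refine (limsup_le_limsup (.of_forall fun n => div_le_add_of_subadditive hsub n z)).trans_eq ?_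
  exact ENNReal.limsup_add_of_right_tendsto_zero
    ((tendsto_const_div_nat hz.ne).comp (tendsto_add_atTop_nat 1)) _

theorem liminf_div_ae_eq_const [IsProbabilityMeasure ν] (hT : Ergodic T ν)
    (hf : ∀ n, Measurable (f n)) (hsub : ∀ m n z, f (m + n) z ≤ f m z + f n (T^[m] z))
    (hint : ∫⁻ z, f 1 z ∂ν ≠ ∞) :
    ∃ c, ∀ᵐ z ∂ν, liminf (fun n : ℕ => f n z / n) atTop = c := by
  refine ergodic_ae_eq_const_of_le_comp hT (.liminf fun n => (hf n).div_const _) ?_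
  filter_upwards [ae_lt_top (hf 1) hint] with z hz
  rw [← liminf_nat_add _ 1]
  refine (liminf_le_liminf (.of_forall fun n => div_le_add_of_subadditive hsub n z)).trans_eq ?_
  exact ENNReal.liminf_add_of_right_tendsto_zero
    ((tendsto_const_div_nat hz.ne).comp (tendsto_add_atTop_nat 1)) _

/-- Sets of points having no short tile are small when almost every point has a tile. -/
theorem tendsto_measure_forall_le [IsFiniteMeasure ν] {p : ℕ → Z → Prop}
    (hp : ∀ k, MeasurableSet {z | p k z}) (h : ∀ᵐ z ∂ν, ∃ k, 1 ≤ k ∧ ¬ p k z) :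
    Tendsto (fun M : ℕ => ν {z | ∀ k, 1 ≤ k → k ≤ M → p k z}) atTop (𝓝 0) := by
  have hm : ∀ M : ℕ, MeasurableSet {z | ∀ k, 1 ≤ k → k ≤ M → p k z} := by
    intro M
    simp only [Set.ofPred_forall]
    exact .iInter fun k => .iInter fun _ => .iInter fun _ => hp k
  have h0 : ν (⋂ M : ℕ, {z | ∀ k, 1 ≤ k → k ≤ M → p k z}) = 0 := by
    refine measure_mono_null (fun z hz => ?_) (ae_iff.1 h)
    simp only [Set.mem_iInter, Set.mem_ofPred_eq] at hz
    simp only [Set.mem_ofPred_eq]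
    rintro ⟨k, hk, hk'⟩
    exact hk' (hz k k hk le_rfl)
  rw [← h0]
  exact tendsto_measure_iInter_atTop (fun M => (hm M).nullMeasurableSet)
    (fun a b hab z hz k hk hk' => hz k hk (hk'.trans hab)) ⟨0, measure_ne_top _ _⟩

theorem le_of_forall_nat_mul_le {r x C : ℝ≥0∞} (hC : C ≠ ∞) (h : ∀ n : ℕ, n * r ≤ n * x + C) :
    r ≤ x := by
  have h1 : ∀ᶠ n : ℕ in atTop, r ≤ x + C / n := by
    filter_upwards [eventually_gt_atTop 0] with n hn
    have hn0 : (n : ℝ≥0∞) ≠ 0 := by exact_mod_cast hn.ne'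
    have := ENNReal.div_le_div_right (h n) n
    rwa [ENNReal.add_div, mul_comm, ENNReal.mul_div_cancel_right hn0 (by simp), mul_comm,
      ENNReal.mul_div_cancel_right hn0 (by simp)] at this
  have h2 : Tendsto (fun n : ℕ => x + C / n) atTop (𝓝 (x + 0)) :=
    tendsto_const_nhds.add (tendsto_const_div_nat hC)
  rw [add_zero] at h2
  exact ge_of_tendsto h2 h1

/-- The upper half of Birkhoff's pointwise ergodic theorem. -/
theorem limsup_birkhoffSum_div_le [IsProbabilityMeasure ν] (hT : Ergodic T ν) {g : Z → ℝ≥0∞}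
    (hg : Measurable g) (hint : ∫⁻ z, g z ∂ν ≠ ∞) :
    ∀ᵐ z ∂ν, limsup (fun n : ℕ => birkhoffSum T g n z / n) atTop ≤ ∫⁻ z, g z ∂ν := by
  obtain ⟨u, hu⟩ := limsup_div_ae_eq_const (f := birkhoffSum T g) hT
    (measurable_birkhoffSum hT.measurable hg) (fun m n z => (birkhoffSum_add T g m n z).le)
    (by simpa using hint)
  suffices u ≤ ∫⁻ z, g z ∂ν by
    filter_upwards [hu] with z hz
    rwa [hz]
  refine le_of_forall_lt_imp_le_of_dense fun r hr => ?_
  have hr' : r ≠ ∞ := hr.ne_top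
  set p : ℕ → Z → Prop := fun k z => birkhoffSum T g k z < k * r
  have hpm : ∀ k, MeasurableSet {z | p k z} := fun k =>
    measurableSet_lt (measurable_birkhoffSum hT.measurable hg k) measurable_const
  have htile : ∀ᵐ z ∂ν, ∃ k, 1 ≤ k ∧ ¬ p k z := by
    filter_upwards [hu] with z hz
    rw [← hz] at hr
    obtain ⟨k, hk, hk'⟩ := ((frequently_lt_of_lt_limsup (by isBoundedDefault) hr).and_eventually
      (eventually_ge_atTop 1)).exists
    refine ⟨k, hk', not_lt.2 ?_⟩
    rw [mul_comm]
    exact (ENNReal.mul_le_of_le_div hk.le)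
  have hB := tendsto_measure_forall_le hpm htile
  have hbound : ∀ M : ℕ, r ≤ ∫⁻ z, g z ∂ν + r * ν {z | ∀ k, 1 ≤ k → k ≤ M → p k z} := by
    intro M
    rcases Nat.eq_zero_or_pos M with rfl | hM
    · have : {z | ∀ k, 1 ≤ k → k ≤ 0 → p k z} = Set.univ := by
        ext z; simp only [Set.mem_ofPred_eq, Set.mem_univ, iff_true]; intro k _ _; omega
      rw [this]
      simp
    set B := {z | ∀ k, 1 ≤ k → k ≤ M → p k z} with hBdef
    have hBm : MeasurableSet B := by
      simp only [hBdef, Set.ofPred_forall]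
      exact .iInter fun k => .iInter fun _ => .iInter fun _ => hpm k
    have hwm : Measurable (fun z => g z + B.indicator (fun _ => r) z) :=
      hg.add (measurable_const.indicator hBm)
    refine le_of_forall_nat_mul_le (C := M * r) (by finiteness) fun n => ?_
    have hpt : ∀ z, (n : ℝ≥0∞) * r ≤
        birkhoffSum T (fun z => g z + B.indicator (fun _ => r) z) n z + M * r := by
      intro z
      refine (le_birkhoffSum_add_of_tiling (T := T) (f := fun n _ => (n : ℝ≥0∞) * r) (M := M)
        (w := fun z => g z + B.indicator (fun _ => r) z) (by simp)
        (fun m n z => by push_cast; rw [add_mul]) (fun z => ?_) n z).trans ?_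
      · by_cases hz : z ∈ B
        · exact ⟨1, le_rfl, hM, by simp [hz]⟩
        · simp only [hBdef, Set.mem_ofPred_eq, not_forall] at hz
          obtain ⟨k, hk1, hkM, hk⟩ := hz
          refine ⟨k, hk1, hkM, (not_lt.1 hk).trans ?_⟩
          exact Finset.sum_le_sum fun j _ => le_self_add
      · gcongr
        simp only [Nat.cast_one, one_mul, Finset.sum_const, Nat.card_Ico, nsmul_eq_mul]
        gcongr
        omega
    calc (n : ℝ≥0∞) * r = ∫⁻ _, (n : ℝ≥0∞) * r ∂ν := by simp
      _ ≤ ∫⁻ z, (birkhoffSum T (fun z => g z + B.indicator (fun _ => r) z) n z + M * r) ∂ν :=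
        lintegral_mono hpt
      _ = n * (∫⁻ z, g z ∂ν + r * ν B) + M * r := by
        rw [lintegral_add_right _ measurable_const, lintegral_birkhoffSum hT.toMeasurePreserving hwm,
          lintegral_add_left hg, lintegral_indicator hBm]
        simp
  have hlim : Tendsto (fun M : ℕ => ∫⁻ z, g z ∂ν + r * ν {z | ∀ k, 1 ≤ k → k ≤ M → p k z}) atTop
      (𝓝 (∫⁻ z, g z ∂ν + r * 0)) :=
    tendsto_const_nhds.add (ENNReal.Tendsto.const_mul hB (Or.inr hr'))
  rw [mul_zero, add_zero] at hlim
  exact ge_of_tendsto' hlim hbound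

theorem tendsto_lintegral_tsub_nat {g : Z → ℝ≥0∞} (hg : Measurable g)
    (hint : ∫⁻ z, g z ∂ν ≠ ∞) :
    Tendsto (fun R : ℕ => ∫⁻ z, (g z - R) ∂ν) atTop (𝓝 0) := by
  have := tendsto_lintegral_of_dominated_convergence (μ := ν)
    (F := fun (R : ℕ) z => g z - R) (f := fun _ => 0) g
    (fun R => hg.sub measurable_const) (fun R => .of_forall fun z => tsub_le_self) hint ?_
  · simpa using this
  filter_upwards [ae_lt_top hg hint] with z hz
  obtain ⟨N, hN⟩ := ENNReal.exists_nat_gt hz.ne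
  refine tendsto_const_nhds.congr' ?_
  filter_upwards [eventually_ge_atTop N] with R hR
  exact (tsub_eq_zero_of_le (hN.le.trans (by exact_mod_cast hR))).symm

/-- Kingman's subadditive ergodic theorem for nonnegative processes. -/
theorem tendsto_div_of_subadditive [IsProbabilityMeasure ν] (hT : Ergodic T ν)
    (hf : ∀ n, Measurable (f n)) (h0 : ∀ z, f 0 z = 0)
    (hsub : ∀ m n z, f (m + n) z ≤ f m z + f n (T^[m] z)) (hint : ∫⁻ z, f 1 z ∂ν ≠ ∞) :
    ∃ c, c ≠ ∞ ∧ ∀ᵐ z ∂ν, Tendsto (fun n : ℕ => f n z / n) atTop (𝓝 c) := by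
  obtain ⟨c, hc⟩ := liminf_div_ae_eq_const hT hf hsub hint
  obtain ⟨u, hu⟩ := limsup_div_ae_eq_const hT hf hsub hint
  have hcu : c ≤ u := by
    obtain ⟨z, h1, h2⟩ := (hc.and hu).exists
    rw [← h1, ← h2]
    exact liminf_le_limsup
  have hu' : u ≤ ∫⁻ z, f 1 z ∂ν := by
    obtain ⟨z, h1, h2⟩ := ((limsup_birkhoffSum_div_le hT (hf 1) hint).and hu).exists
    rw [← h2]
    refine (limsup_le_limsup (.of_forall fun n => ?_)).trans h1
    exact ENNReal.div_le_div_right (le_birkhoffSum_of_subadditive h0 hsub n z) _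
  have hctop : c ≠ ∞ := ((hcu.trans hu').trans_lt (lt_top_iff_ne_top.2 hint)).ne
  have huc : u ≤ c := by
    refine le_of_forall_gt_imp_ge_of_dense fun r hr => ?_
    rcases eq_or_ne r ∞ with rfl | hr'
    · exact le_top
    set p : ℕ → Z → Prop := fun k z => k * r < f k z
    have hpm : ∀ k, MeasurableSet {z | p k z} := fun k => measurableSet_lt measurable_const (hf k)
    have htile : ∀ᵐ z ∂ν, ∃ k, 1 ≤ k ∧ ¬ p k z := by
      filter_upwards [hc] with z hz
      rw [← hz] at hr
      obtain ⟨k, hk, hk'⟩ := ((frequently_lt_of_liminf_lt (by isBoundedDefault) hr).and_eventually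
        (eventually_ge_atTop 1)).exists
      refine ⟨k, hk', not_lt.2 ?_⟩
      rw [mul_comm]
      exact (ENNReal.div_le_iff_le_mul (Or.inl (by simp; omega)) (Or.inl (by simp))).1 hk.le
    have hB := tendsto_measure_forall_le hpm htile
    have hbound : ∀ M R : ℕ, 0 < M →
        u ≤ r + ∫⁻ z in {z | ∀ k, 1 ≤ k → k ≤ M → p k z}, f 1 z ∂ν + ∫⁻ z, (f 1 z - R) ∂ν := by
      intro M R hM
      set B := {z | ∀ k, 1 ≤ k → k ≤ M → p k z} with hBdef
      have hBm : MeasurableSet B := by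
        simp only [hBdef, Set.ofPred_forall]
        exact .iInter fun k => .iInter fun _ => .iInter fun _ => hpm k
      set w : Z → ℝ≥0∞ := fun z => r + B.indicator (f 1) z with hw
      have hwm : Measurable w := measurable_const.add ((hf 1).indicator hBm)
      have hRm : Measurable fun z => f 1 z - (R : ℝ≥0∞) := (hf 1).sub measurable_const
      have hpt : ∀ n z, f n z ≤
          birkhoffSum T (fun z => w z + (f 1 z - R)) n z + M * R := by
        intro n z
        refine (le_birkhoffSum_add_of_tiling (w := w) (M := M) h0 hsub (fun z => ?_) n z).trans ?_
        · by_cases hz : z ∈ B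
          · exact ⟨1, le_rfl, hM, by simp [hw, hz]⟩
          · simp only [hBdef, Set.mem_ofPred_eq, not_forall] at hz
            obtain ⟨k, hk1, hkM, hk⟩ := hz
            refine ⟨k, hk1, hkM, (not_lt.1 hk).trans ?_⟩
            calc (k : ℝ≥0∞) * r = ∑ j ∈ Finset.range k, r := by simp
              _ ≤ _ := Finset.sum_le_sum fun j _ => le_self_add
        · have e : birkhoffSum T (fun z => w z + (f 1 z - R)) n z =
              birkhoffSum T w n z + birkhoffSum T (fun z => f 1 z - (R : ℝ≥0∞)) n z :=
            Finset.sum_add_distrib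
          rw [e, add_assoc]
          gcongr
          calc ∑ k ∈ Finset.Ico (n - M) n, f 1 (T^[k] z)
              ≤ ∑ k ∈ Finset.Ico (n - M) n, ((f 1 (T^[k] z) - R) + R) :=
                Finset.sum_le_sum fun k _ => le_tsub_add
            _ = ∑ k ∈ Finset.Ico (n - M) n, (f 1 (T^[k] z) - R) + (n - (n - M) : ℕ) * R := by
                rw [Finset.sum_add_distrib]; simp
            _ ≤ _ := by
                gcongr
                · refine Finset.sum_le_sum_of_subset fun k hk => ?_
                  simp only [Finset.mem_Ico, Finset.mem_range] at hk ⊢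
                  exact hk.2
                · omega
      have hint' : ∫⁻ z, (w z + (f 1 z - R)) ∂ν =
          r + ∫⁻ z in B, f 1 z ∂ν + ∫⁻ z, (f 1 z - R) ∂ν := by
        rw [lintegral_add_left hwm, hw, lintegral_add_left measurable_const,
          lintegral_indicator hBm]
        simp
      have hfin : ∫⁻ z, (w z + (f 1 z - R)) ∂ν ≠ ∞ := by
        rw [hint']
        have h1 : ∫⁻ z in B, f 1 z ∂ν ≠ ∞ := ((setLIntegral_le_lintegral _ _).trans_lt
          (lt_top_iff_ne_top.2 hint)).ne
        have h2 : ∫⁻ z, (f 1 z - R) ∂ν ≠ ∞ := ((lintegral_mono fun z => tsub_le_self).trans_lt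
          (lt_top_iff_ne_top.2 hint)).ne
        finiteness
      obtain ⟨z, h1, h2⟩ := ((limsup_birkhoffSum_div_le hT (hwm.add hRm) hfin).and hu).exists
      rw [← hint', ← h2]
      refine le_trans ?_ h1
      have h3 : Tendsto (fun n : ℕ => ((M : ℝ≥0∞) * R) / n) atTop (𝓝 0) :=
        tendsto_const_div_nat (by finiteness)
      refine le_of_le_of_eq ?_ (ENNReal.limsup_add_of_right_tendsto_zero h3
        fun n => birkhoffSum T (fun z => w z + (f 1 z - R)) n z / n)
      refine limsup_le_limsup (.of_forall fun n => ?_)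
      rw [Pi.add_apply, ← ENNReal.add_div]
      exact ENNReal.div_le_div_right (hpt n z) _
    have hbound' : ∀ M : ℕ, 0 < M →
        u ≤ r + ∫⁻ z in {z | ∀ k, 1 ≤ k → k ≤ M → p k z}, f 1 z ∂ν := by
      intro M hM
      have h1 := tendsto_const_nhds (x := r + ∫⁻ z in {z | ∀ k, 1 ≤ k → k ≤ M → p k z}, f 1 z ∂ν)
        |>.add (tendsto_lintegral_tsub_nat (hf 1) hint)
      rw [add_zero] at h1
      exact ge_of_tendsto' h1 fun R => hbound M R hM
    have h1 := (tendsto_const_nhds (x := r)).add (tendsto_setLIntegral_zero hint hB)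
    rw [add_zero] at h1
    refine ge_of_tendsto h1 ?_
    filter_upwards [eventually_gt_atTop 0] with M hM using hbound' M hM
  refine ⟨c, hctop, ?_⟩
  filter_upwards [hc, hu] with z h1 h2
  exact tendsto_of_le_liminf_of_limsup_le h1.ge (h2.trans_le huc)

end ErgodicTheory

section Scale

theorem scale_mono (n : ℕ) {x y : EReal} (h : x ≤ y) : scale n x ≤ scale n y :=
  mul_le_mul_of_nonneg_left h (EReal.coe_nonneg.2 (by positivity))

theorem scale_coe (n : ℕ) (x : ℝ) : scale n (x : EReal) = ((x / n : ℝ) : EReal) := by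
  rw [scale, ← EReal.coe_mul, inv_mul_eq_div]

theorem scale_bot {n : ℕ} (hn : 0 < n) : scale n ⊥ = ⊥ := by
  rw [scale, EReal.coe_mul_bot_of_pos (by positivity)]

theorem scale_top {n : ℕ} (hn : 0 < n) : scale n ⊤ = ⊤ := by
  rw [scale, EReal.coe_mul_top_of_pos (by positivity)]

theorem scale_add (n : ℕ) (x y : EReal) : scale n (x + y) = scale n x + scale n y :=
  EReal.left_distrib_of_nonneg_of_ne_top (EReal.coe_nonneg.2 (by positivity))
    (EReal.coe_ne_top _) _ _

theorem le_mul_of_scale_le {n : ℕ} (hn : 0 < n) {x : EReal} {q : ℝ} (h : scale n x ≤ q) :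
    x ≤ ((q * n : ℝ) : EReal) := by
  have hn' : (0 : ℝ) < n := by exact_mod_cast hn
  induction x with
  | bot => exact bot_le
  | top => rw [scale_top hn] at h; exact absurd h (not_le.2 (EReal.coe_lt_top q))
  | coe x =>
    rw [scale_coe, EReal.coe_le_coe_iff, div_le_iff₀ hn'] at h
    exact_mod_cast h

theorem tendsto_scale_coe (C : ℝ) : Tendsto (fun n : ℕ => scale n (C : EReal)) atTop (𝓝 0) := by
  simp only [scale_coe]
  exact_mod_cast (continuous_coe_real_ereal.tendsto 0).comp
    (tendsto_const_div_atTop_nhds_zero_nat C)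

theorem toENNReal_div {n : ℕ} (hn : 0 < n) (x : EReal) :
    x.toENNReal / n = (scale n x).toENNReal := by
  rw [scale, EReal.toENNReal_mul (EReal.coe_nonneg.2 (by positivity)), EReal.real_coe_toENNReal,
    ENNReal.ofReal_inv_of_pos (by exact_mod_cast hn), ENNReal.ofReal_natCast, div_eq_mul_inv,
    mul_comm]

/-- A sequence in `[-∞, ∞]` whose positive parts after every integral upward translation converge
to finite limits has a limit that depends only on these limits. -/
theorem exists_limit_of_toENNReal (c : ℕ → ℝ≥0∞) (hc : ∀ K, c K ≠ ∞) :
    ∃ g : EReal, g ≠ ⊤ ∧ ∀ x : ℕ → EReal,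
      (∀ K : ℕ, Tendsto (fun n => (x n + (K : ℝ)).toENNReal) atTop (𝓝 (c K))) →
      Tendsto x atTop (𝓝 g) := by
  by_cases h : ∃ K, c K ≠ 0
  · obtain ⟨K, hK⟩ := h
    refine ⟨(c K : EReal) - (K : ℝ), ?_, fun x hx => ?_⟩
    · rw [← ENNReal.ofReal_toReal (hc K), EReal.coe_ennreal_ofReal, ← EReal.coe_sub]
      exact EReal.coe_ne_top _
    have h1 : ∀ᶠ n in atTop, x n = ((x n + (K : ℝ)).toENNReal : EReal) - (K : ℝ) := by
      filter_upwards [(hx K).eventually (lt_mem_nhds (bot_lt_iff_ne_bot.2 hK))] with n hn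
      rw [EReal.coe_toENNReal (EReal.toENNReal_pos_iff.1 hn).le, EReal.add_sub_cancel_right]
    refine Tendsto.congr' (EventuallyEq.symm h1) ?_
    have h2 : Tendsto (fun n => ((x n + (K : ℝ)).toENNReal : EReal)) atTop (𝓝 (c K : EReal)) :=
      (continuous_coe_ennreal_ereal.tendsto _).comp (hx K)
    have h3 := (EReal.continuousAt_add (p := ((c K : EReal), ((-(K : ℝ) : ℝ) : EReal)))
      (Or.inr (EReal.coe_ne_bot _)) (Or.inr (EReal.coe_ne_top _))).tendsto.comp
      (h2.prodMk_nhds tendsto_const_nhds)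
    simpa [Function.comp_def, sub_eq_add_neg] using h3
  · push Not at h
    refine ⟨⊥, by simp, fun x hx => ?_⟩
    rw [EReal.tendsto_nhds_bot_iff_real]
    intro y
    obtain ⟨K, hK⟩ := exists_nat_gt (1 - y)
    have h1 := hx K
    rw [h K] at h1
    filter_upwards [h1.eventually (gt_mem_nhds one_pos)] with n hn
    have h2 : x n + (K : ℝ) < 1 := by
      by_contra! h3
      have := EReal.toENNReal_le_toENNReal h3
      rw [show (1 : EReal).toENNReal = 1 by
        rw [← EReal.coe_one, EReal.real_coe_toENNReal, ENNReal.ofReal_one]] at this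
      exact absurd hn (not_lt.2 this)
    generalize x n = t at h2
    induction t with
    | bot => exact EReal.bot_lt_coe y
    | top => exact absurd h2 (by rw [EReal.top_add_coe]; exact not_lt.2 le_top)
    | coe t =>
      norm_cast at h2 ⊢
      linarith

theorem exists_forall_le_of_tendsto_scale {x : ℕ → EReal} {g : EReal}
    (h : Tendsto (fun n => scale n (x n)) atTop (𝓝 g)) (hx : ∀ n, x n ≠ ⊤) {q : ℝ}
    (hq : g < q) : ∃ C : ℕ, ∀ n : ℕ, x n ≤ ((q * n + C : ℝ) : EReal) := by
  obtain ⟨N, hN⟩ := eventually_atTop.1 (h.eventually (gt_mem_nhds hq))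
  obtain ⟨C, hC⟩ := exists_nat_ge (∑ n ∈ Finset.range (N + 1), |(x n).toReal - q * n|)
  refine ⟨C, fun n => ?_⟩
  rcases le_or_gt n N with hn | hn
  · refine (EReal.le_coe_toReal (hx n)).trans (EReal.coe_le_coe_iff.2 ?_)
    have h1 := Finset.single_le_sum (f := fun n : ℕ => |(x n).toReal - q * n|)
      (fun i _ => abs_nonneg _) (Finset.mem_range.2 (Nat.lt_succ_of_le hn))
    have h2 := le_abs_self ((x n).toReal - q * n)
    linarith
  · refine (le_mul_of_scale_le (by omega) (hN n hn.le).le).trans (EReal.coe_le_coe_iff.2 ?_)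
    have : (0 : ℝ) ≤ C := Nat.cast_nonneg C
    linarith

theorem le_of_frequently_le_of_tendsto_scale {x : ℕ → EReal} {g : EReal} {q C : ℝ}
    (h : Tendsto (fun n => scale n (x n)) atTop (𝓝 g))
    (hx : ∃ᶠ n : ℕ in atTop, x n ≤ ((q * n + C : ℝ) : EReal)) : g ≤ q := by
  by_contra! hg
  obtain ⟨r, hr, hr'⟩ := EReal.lt_iff_exists_real_btwn.1 hg
  rw [EReal.coe_lt_coe_iff] at hr
  have h1 : ∀ᶠ n : ℕ in atTop, C < (r - q) * n :=
    (tendsto_natCast_atTop_atTop.const_mul_atTop (sub_pos.2 hr)).eventually_gt_atTop C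
  obtain ⟨n, ⟨⟨h2, h3⟩, h4⟩, h5⟩ := ((hx.and_eventually h1).and_eventually
    (h.eventually (lt_mem_nhds hr'))).and_eventually (eventually_gt_atTop 0) |>.exists
  have h6 := (h4.trans_le (scale_mono n h2))
  rw [scale_coe, EReal.coe_lt_coe_iff, lt_div_iff₀ (by exact_mod_cast h5)] at h6
  linarith

end Scale

section Kingman

variable {Z : Type*} [MeasurableSpace Z] {ν : Measure Z} [IsProbabilityMeasure ν] {T : Z → Z}

/-- Kingman's subadditive ergodic theorem for processes with values in `[-∞, ∞]`. -/
theorem exists_tendsto_scale_of_subadditive (hT : Ergodic T ν) {F : ℕ → Z → EReal}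
    (hF : ∀ n, Measurable (F n)) (h0 : ∀ z, F 0 z ≤ 0)
    (hsub : ∀ m n z, F (m + n) z ≤ F m z + F n (T^[m] z))
    (hint : ∫⁻ z, (F 1 z).toENNReal ∂ν ≠ ∞) :
    ∃ g : EReal, g ≠ ⊤ ∧ ∀ᵐ z ∂ν, Tendsto (fun n : ℕ => scale n (F n z)) atTop (𝓝 g) := by
  have key : ∀ K : ℕ, ∃ c, c ≠ ∞ ∧ ∀ᵐ z ∂ν,
      Tendsto (fun n : ℕ => (F n z + ((K * n : ℝ) : EReal)).toENNReal / n) atTop (𝓝 c) := by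
    intro K
    refine tendsto_div_of_subadditive (T := T) hT
      (f := fun n z => (F n z + ((K * n : ℝ) : EReal)).toENNReal)
      (fun n => ((hF n).add_const _).ereal_toENNReal) (fun z => ?_) (fun m n z => ?_) ?_
    · simpa [EReal.toENNReal_eq_zero_iff] using h0 z
    · refine le_trans (EReal.toENNReal_le_toENNReal ?_) EReal.toENNReal_add_le
      have e : ((K * (m + n : ℕ) : ℝ) : EReal) = ((K * m : ℝ) : EReal) + ((K * n : ℝ) : EReal) := by
        rw [← EReal.coe_add, Nat.cast_add, mul_add]
      rw [e, add_add_add_comm]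
      exact add_le_add_left (hsub m n z) _
    · refine ne_of_lt ((lintegral_mono fun z => EReal.toENNReal_add_le).trans_lt ?_)
      rw [lintegral_add_left (hF 1).ereal_toENNReal]
      rw [lintegral_const, measure_univ, mul_one, EReal.real_coe_toENNReal]
      exact ENNReal.add_lt_top.2 ⟨lt_top_iff_ne_top.2 hint, ENNReal.ofReal_lt_top⟩
  choose c hc hlim using key
  obtain ⟨g, hg, hgl⟩ := exists_limit_of_toENNReal c hc
  refine ⟨g, hg, ?_⟩
  filter_upwards [ae_all_iff.2 hlim] with z hz
  refine hgl _ fun K => (hz K).congr' ?_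
  filter_upwards [eventually_gt_atTop 0] with n hn
  rw [toENNReal_div hn, scale_add, scale_coe, mul_div_cancel_right₀]
  exact_mod_cast hn.ne'

theorem ae_tendsto_comp_iterate_scale (hT : Ergodic T ν) {a : Z → EReal} (ha : Measurable a)
    (ha0 : ∀ z, 0 ≤ a z) (hint : ∫⁻ z, (a z).toENNReal ∂ν ≠ ∞) :
    ∀ᵐ z ∂ν, Tendsto (fun n : ℕ => scale n (a (T^[n] z))) atTop (𝓝 0) := by
  set g : Z → ℝ≥0∞ := fun z => (a z).toENNReal with hg
  have hgm : Measurable g := ha.ereal_toENNReal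
  have hR : ∀ R : ℕ, ∫⁻ z, (g z - R) ∂ν ≠ ∞ := fun R =>
    ((lintegral_mono fun z => tsub_le_self).trans_lt (lt_top_iff_ne_top.2 hint)).ne
  have h1 := ae_all_iff.2 fun R : ℕ => limsup_birkhoffSum_div_le hT
    (hgm.sub (measurable_const (a := (R : ℝ≥0∞)))) (hR R)
  filter_upwards [h1] with z hz
  have h2 : limsup (fun n : ℕ => g (T^[n] z) / (n + 1 : ℕ)) atTop ≤ 0 := by
    refine ge_of_tendsto' (tendsto_lintegral_tsub_nat hgm hint) fun R => le_trans ?_ (hz R)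
    have h3 : Tendsto (fun n : ℕ => (R : ℝ≥0∞) / (n + 1 : ℕ)) atTop (𝓝 0) :=
      (tendsto_const_div_nat (by finiteness)).comp (tendsto_add_atTop_nat 1)
    rw [← limsup_nat_add
      (fun n : ℕ => birkhoffSum T (g - fun _ => (R : ℝ≥0∞)) n z / (n : ℝ≥0∞)) 1]
    refine le_of_le_of_eq ?_ (ENNReal.limsup_add_of_right_tendsto_zero h3 _)
    refine limsup_le_limsup (.of_forall fun n => ?_)
    rw [Pi.add_apply, ← ENNReal.add_div]
    refine ENNReal.div_le_div_right ?_ _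
    calc g (T^[n] z) ≤ (g (T^[n] z) - R) + R := le_tsub_add
      _ ≤ _ := by
        gcongr
        exact Finset.single_le_sum (f := fun k => g (T^[k] z) - (R : ℝ≥0∞)) (fun _ _ => zero_le)
          (Finset.mem_range.2 (Nat.lt_succ_self n))
  have h4 : Tendsto (fun n : ℕ => g (T^[n] z) / (n + 1 : ℕ)) atTop (𝓝 0) :=
    tendsto_of_le_liminf_of_limsup_le zero_le h2
  have h5 : Tendsto (fun n : ℕ => 2 * (g (T^[n] z) / (n + 1 : ℕ))) atTop (𝓝 0) := by
    simpa using ENNReal.Tendsto.const_mul h4 (Or.inr ENNReal.ofNat_ne_top) (a := 2)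
  have h6 : Tendsto (fun n : ℕ => g (T^[n] z) / n) atTop (𝓝 0) := by
    refine tendsto_of_tendsto_of_tendsto_of_le_of_le' tendsto_const_nhds h5
      (.of_forall fun n => zero_le) ?_
    filter_upwards [eventually_gt_atTop 0] with n hn
    have hn0 : (n : ℝ≥0∞) ≠ 0 := by exact_mod_cast hn.ne'
    rw [← mul_div_assoc]
    refine (ENNReal.div_le_iff_le_mul (Or.inl hn0) (Or.inl (by simp))).2 ?_
    rw [ENNReal.mul_comm_div]
    rw [mul_comm 2, mul_assoc]
    refine le_mul_of_one_le_right' ?_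
    rw [← mul_div_assoc]
    refine (ENNReal.le_div_iff_mul_le (Or.inl (by simp)) (Or.inl (by simp))).2 ?_
    rw [one_mul]
    norm_cast
    omega
  have h7 := (continuous_coe_ennreal_ereal.tendsto 0).comp h6
  refine Tendsto.congr' ?_ (by simpa using h7)
  filter_upwards [eventually_gt_atTop 0] with n hn
  simp only [Function.comp_apply, hg]
  rw [toENNReal_div hn, EReal.coe_toENNReal]
  exact mul_nonneg (EReal.coe_nonneg.2 (by positivity)) (ha0 _)

/-- Some typical point visits infinitely often one of the sets of a covering sequence. -/
theorem exists_frequently_iterate_mem {S : Z → Z} (hS : MeasurePreserving S ν ν)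
    {E : ℕ → Set Z} (hE : ∀ C, MeasurableSet (E C)) (hcov : ∀ᵐ z ∂ν, ∃ C, z ∈ E C)
    {P : Z → Prop} (hP : ∀ᵐ z ∂ν, P z) : ∃ C z, P z ∧ ∃ᶠ n in atTop, S^[n] z ∈ E C := by
  have h1 : ν (⋃ C, E C) ≠ 0 := by
    have : (⋃ C, E C) ∈ ae ν := by
      filter_upwards [hcov] with z hz using Set.mem_iUnion.2 hz
    rw [prob_compl_eq_zero_iff (.iUnion hE) |>.1 (mem_ae_iff.1 this)]
    exact one_ne_zero
  obtain ⟨C, hC⟩ := exists_measure_pos_of_not_measure_iUnion_null h1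
  have h2 := hS.conservative.ae_mem_imp_frequently_image_mem (hE C).nullMeasurableSet
  obtain ⟨z, hz, h3, h4⟩ := ((frequently_ae_mem_iff.2 hC.ne').and_eventually (h2.and hP)).exists
  exact ⟨C, z, h4, h3 hz⟩

end Kingman

section Walks

variable {ι : Type*}

/-- `walkSup s n f i` is the maximal weight of a walk of length `n` which starts at `i` and
continues in `s`, the weight of the `k`-th step being given by `f k`. -/
noncomputable def walkSup (s : Set ι) : ℕ → (ℕ → Mat ι) → ι → EReal
  | 0, _, _ => 0
  | n + 1, f, i => ⨆ j ∈ s, f 0 i j + walkSup s n (fun k => f (k + 1)) j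

/-- The maximal weight of a walk of length `n` in `s`. -/
noncomputable def compSup (s : Set ι) (n : ℕ) (f : ℕ → Mat ι) : EReal := ⨆ i ∈ s, walkSup s n f i

/-- The maximum of `y(n, 0)` for the submatrices indexed by `s`. -/
noncomputable def backSup (s : Set ι) (n : ℕ) (z : ℤ → Mat ι) : EReal :=
  compSup s n fun k => z (-((k : ℤ) + 1))

/-- The maximum of `x(n, 0)` for the submatrices indexed by `s`. -/
noncomputable def fwdSup (s : Set ι) (n : ℕ) (z : ℤ → Mat ι) : EReal :=
  compSup s n fun k => z ((n : ℤ) - 1 - k)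

theorem applyProd_restrict (s : Set ι) (n : ℕ) (f : ℕ → Mat ι) (i : s) :
    applyProd n (fun k (i j : s) => f k i j) (fun _ => 0) i = walkSup s n f i := by
  induction n generalizing f i with
  | zero => rfl
  | succ n ih => simp only [applyProd, walkSup, mulVec, ih (fun k => f (k + 1)), iSup_subtype]

theorem applyProd_eq_walkSup_univ (n : ℕ) (f : ℕ → Mat ι) (i : ι) :
    applyProd n f (fun _ => 0) i = walkSup Set.univ n f i := by
  induction n generalizing f i with
  | zero => rfl
  | succ n ih =>
    simp only [applyProd, walkSup, mulVec, ih (fun k => f (k + 1)), Set.mem_univ, iSup_pos]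

theorem xvec_eq_applyProd (B : ℤ → Mat ι) (n : ℕ) :
    xvec B n = applyProd n (fun k => B ((n : ℤ) - 1 - k)) (fun _ => 0) := by
  induction n with
  | zero => rfl
  | succ n ih =>
    rw [xvec, applyProd, ih]
    congr 2
    · push_cast; ring_nf
    · funext k; push_cast; ring_nf

theorem iSup_xvec_restrict (s : Set ι) (z : ℤ → Mat ι) (n : ℕ) :
    ⨆ i : s, xvec (fun m (i j : s) => z m i j) n i = fwdSup s n z := by
  rw [xvec_eq_applyProd, fwdSup, compSup, iSup_subtype']
  exact iSup_congr fun i => applyProd_restrict s n (fun k => z ((n : ℤ) - 1 - k)) i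

theorem walkSup_le_compSup {s : Set ι} {i : ι} (hi : i ∈ s) (n : ℕ) (f : ℕ → Mat ι) :
    walkSup s n f i ≤ compSup s n f :=
  le_iSup₂ (f := fun i (_ : i ∈ s) => walkSup s n f i) i hi

theorem walkSup_mono {s t : Set ι} (h : s ⊆ t) (n : ℕ) (f : ℕ → Mat ι) (i : ι) :
    walkSup s n f i ≤ walkSup t n f i := by
  induction n generalizing f i with
  | zero => exact le_rfl
  | succ n ih =>
    exact iSup₂_le fun j hj => le_iSup₂_of_le j (h hj) (add_le_add_right (ih _ j) _)

theorem walkSup_add_le (s : Set ι) (m n : ℕ) (f : ℕ → Mat ι) {i : ι} (hi : i ∈ s) :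
    walkSup s (m + n) f i ≤ walkSup s m f i + compSup s n fun k => f (k + m) := by
  induction m generalizing f i with
  | zero => simpa [walkSup] using walkSup_le_compSup hi n f
  | succ m ih =>
    rw [Nat.succ_add]
    refine iSup₂_le fun j hj => ?_
    refine (add_le_add_right (ih (fun k => f (k + 1)) hj) _).trans ?_
    rw [← add_assoc]
    exact add_le_add_left (le_iSup₂_of_le (f := fun j (_ : j ∈ s) =>
      f 0 i j + walkSup s m (fun k => f (k + 1)) j) j hj le_rfl) _

theorem compSup_add_le (s : Set ι) (m n : ℕ) (f : ℕ → Mat ι) :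
    compSup s (m + n) f ≤ compSup s m f + compSup s n fun k => f (k + m) :=
  iSup₂_le fun _ hi => (walkSup_add_le s m n f hi).trans
    (add_le_add_left (walkSup_le_compSup hi m f) _)

theorem compSup_zero_le (s : Set ι) (f : ℕ → Mat ι) : compSup s 0 f ≤ 0 :=
  iSup₂_le fun _ _ => le_rfl

theorem compSup_one_le (s : Set ι) (f : ℕ → Mat ι) : compSup s 1 f ≤ ⨆ i, ⨆ j, f 0 i j :=
  iSup₂_le fun i _ => iSup₂_le fun j _ => by
    simpa [walkSup] using le_iSup₂ (f := fun i j => f 0 i j) i j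

theorem iSup_ne_top_of_finite {κ : Type*} [Finite κ] {x : κ → EReal} (h : ∀ k, x k ≠ ⊤) :
    ⨆ k, x k ≠ ⊤ := by
  cases isEmpty_or_nonempty κ
  · simp
  · obtain ⟨k, hk⟩ := exists_eq_ciSup_of_finite (f := x)
    rw [← hk]
    exact h k

theorem biSup_ne_top_of_finite {κ : Type*} [Finite κ] {s : Set κ} {x : κ → EReal}
    (h : ∀ k, x k ≠ ⊤) : ⨆ k ∈ s, x k ≠ ⊤ := by
  rw [iSup_subtype']
  exact iSup_ne_top_of_finite fun k => h k

theorem walkSup_ne_top [Finite ι] (s : Set ι) (n : ℕ) {f : ℕ → Mat ι}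
    (hf : ∀ k i j, f k i j ≠ ⊤) (i : ι) : walkSup s n f i ≠ ⊤ := by
  induction n generalizing f i with
  | zero => simp [walkSup]
  | succ n ih =>
    exact biSup_ne_top_of_finite fun j =>
      EReal.add_ne_top (hf 0 i j) (ih (fun k => hf (k + 1)) j)

theorem compSup_ne_top [Finite ι] (s : Set ι) (n : ℕ) {f : ℕ → Mat ι}
    (hf : ∀ k i j, f k i j ≠ ⊤) : compSup s n f ≠ ⊤ :=
  biSup_ne_top_of_finite fun i => walkSup_ne_top s n hf i

theorem walkSup_le_of_closed {R V : Set ι} {f : ℕ → Mat ι}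
    (hV : ∀ k, ∀ i ∈ V, ∀ j ∈ R, f k i j ≠ ⊥ → j ∈ V) (n : ℕ) {i : ι} (hi : i ∈ V) :
    walkSup R n f i ≤ walkSup V n f i := by
  induction n generalizing f i with
  | zero => exact le_rfl
  | succ n ih =>
    refine iSup₂_le fun j hj => ?_
    by_cases hb : f 0 i j = ⊥
    · simp [hb]
    · have hj' := hV 0 i hi j hj hb
      exact le_iSup₂_of_le j hj' (add_le_add_right (ih (fun k => hV (k + 1)) hj') _)

/-- A walk in `R` which starts in `U` stays in `U` for some time `k`, and if it leaves `U` then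
it enters `V` for good. -/
theorem walkSup_le_iSup_exit {R U V : Set ι} (hR : R ⊆ U ∪ V) {f : ℕ → Mat ι}
    (hV : ∀ k, ∀ i ∈ V, ∀ j ∈ R, f k i j ≠ ⊥ → j ∈ V) (n : ℕ) {c : ℕ → EReal} (hc0 : 0 ≤ c n)
    (hc : ∀ k < n, ∀ i, ∀ j ∈ V,
      f k i j + walkSup V (n - 1 - k) (fun l => f (l + (k + 1))) j ≤ c k) {i : ι} (hi : i ∈ U) :
    walkSup R n f i ≤ ⨆ k : Fin (n + 1), walkSup U k f i + c k := by
  induction n generalizing f c i with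
  | zero =>
    refine le_iSup_of_le 0 ?_
    simpa [walkSup] using hc0
  | succ n ih =>
    refine iSup₂_le fun j hj => ?_
    rcases hR hj with hjU | hjV
    · have h1 := ih (f := fun k => f (k + 1)) (c := fun k => c (k + 1)) (fun k => hV (k + 1)) hc0
        (fun k hk i j hj => by
          have := hc (k + 1) (by omega) i j hj
          rwa [show n + 1 - 1 - (k + 1) = n - 1 - k by omega] at this) hjU
      obtain ⟨k, hk⟩ := exists_eq_ciSup_of_finite
        (f := fun k : Fin (n + 1) => walkSup U k (fun k => f (k + 1)) j + c (k + 1))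
      rw [← hk] at h1
      refine le_iSup_of_le k.succ ((add_le_add_right h1 _).trans ?_)
      rw [← add_assoc, Fin.val_succ]
      exact add_le_add_left (le_iSup₂_of_le (f := fun j (_ : j ∈ U) =>
        f 0 i j + walkSup U k (fun k => f (k + 1)) j) j hjU le_rfl) _
    · refine le_iSup_of_le 0 ?_
      have h1 := hc 0 (by omega) i j hjV
      refine (add_le_add_right (walkSup_le_of_closed (fun k => hV (k + 1)) n hjV) _).trans ?_
      simpa [walkSup] using h1

end Walks

section Shift

variable {α : Type*}

/-- The shift on two-sided sequences. -/
def shift (z : ℤ → α) : ℤ → α := fun n => z (n + 1)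

/-- The inverse shift on two-sided sequences. -/
def unshift (z : ℤ → α) : ℤ → α := fun n => z (n - 1)

theorem shift_iterate (m : ℕ) (z : ℤ → α) : shift^[m] z = fun n => z (n + m) := by
  induction m generalizing z with
  | zero => simp
  | succ m ih =>
    rw [Function.iterate_succ_apply, ih]
    funext n
    simp only [shift]
    push_cast
    ring_nf

theorem unshift_iterate (m : ℕ) (z : ℤ → α) : unshift^[m] z = fun n => z (n - m) := by
  induction m generalizing z with
  | zero => simp
  | succ m ih =>
    rw [Function.iterate_succ_apply, ih]
    funext n
    simp only [unshift]
    push_cast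
    ring_nf

/-- The shift as a measurable equivalence. -/
def shiftEquiv (α : Type*) [MeasurableSpace α] : (ℤ → α) ≃ᵐ (ℤ → α) where
  toFun := shift
  invFun := unshift
  left_inv z := by funext n; simp [shift, unshift]
  right_inv z := by funext n; simp [shift, unshift]
  measurable_toFun := measurable_pi_lambda _ fun n => measurable_pi_apply (n + 1)
  measurable_invFun := measurable_pi_lambda _ fun n => measurable_pi_apply (n - 1)

theorem ergodic_unshift [MeasurableSpace α] {ν : Measure (ℤ → α)} (h : Ergodic shift ν) :
    Ergodic unshift ν :=
  Ergodic.symm (e := shiftEquiv α) h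

theorem ae_shift [MeasurableSpace α] {ν : Measure (ℤ → α)} (h : Ergodic shift ν)
    {p : (ℤ → α) → Prop} (hp : ∀ᵐ z ∂ν, p z) : ∀ᵐ z ∂ν, p (shift z) :=
  h.toMeasurePreserving.quasiMeasurePreserving.ae hp

theorem ae_unshift [MeasurableSpace α] {ν : Measure (ℤ → α)} (h : Ergodic shift ν)
    {p : (ℤ → α) → Prop} (hp : ∀ᵐ z ∂ν, p z) : ∀ᵐ z ∂ν, p (unshift z) :=
  (ergodic_unshift h).toMeasurePreserving.quasiMeasurePreserving.ae hp

theorem ae_forall_coord [MeasurableSpace α] {ν : Measure (ℤ → α)} (h : Ergodic shift ν)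
    {p : α → Prop} (hp : ∀ᵐ z ∂ν, p (z 0)) : ∀ᵐ z ∂ν, ∀ m, p (z m) := by
  refine ae_all_iff.2 fun m => ?_
  rcases Int.eq_nat_or_neg m with ⟨n, rfl | rfl⟩
  · have := (h.toMeasurePreserving.iterate n).quasiMeasurePreserving.ae hp
    filter_upwards [this] with z hz
    simpa [shift_iterate] using hz
  · have := ((ergodic_unshift h).toMeasurePreserving.iterate n).quasiMeasurePreserving.ae hp
    filter_upwards [this] with z hz
    simpa [unshift_iterate] using hz

end Shift

section Growth

variable {ι : Type*}

theorem backSup_add_le (s : Set ι) (m n : ℕ) (z : ℤ → Mat ι) :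
    backSup s (m + n) z ≤ backSup s m z + backSup s n (unshift^[m] z) := by
  refine (compSup_add_le s m n _).trans_eq ?_
  rw [backSup, backSup, unshift_iterate]
  congr 2
  funext k
  push_cast
  ring_nf

theorem fwdSup_add_le (s : Set ι) (m n : ℕ) (z : ℤ → Mat ι) :
    fwdSup s (m + n) z ≤ fwdSup s m z + fwdSup s n (shift^[m] z) := by
  rw [add_comm m n, add_comm (fwdSup s m z)]
  refine (compSup_add_le s n m _).trans_eq ?_
  rw [fwdSup, fwdSup, shift_iterate]
  congr 2 <;>
  · funext k
    push_cast
    ring_nf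

theorem backSup_eq_fwdSup (s : Set ι) (n : ℕ) (z : ℤ → Mat ι) :
    backSup s n z = fwdSup s n (unshift^[n] z) := by
  rw [backSup, fwdSup, unshift_iterate]
  congr 1
  funext k
  ring_nf

theorem fwdSup_eq_backSup (s : Set ι) (n : ℕ) (z : ℤ → Mat ι) :
    fwdSup s n z = backSup s n (shift^[n] z) := by
  rw [backSup, fwdSup, shift_iterate]
  congr 1
  funext k
  ring_nf

variable [Finite ι]

theorem measurable_walkSup {Z : Type*} [MeasurableSpace Z] (s : Set ι) (n : ℕ)
    {f : ℕ → Z → Mat ι} (hf : ∀ k, Measurable (f k)) (i : ι) :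
    Measurable fun z => walkSup s n (fun k => f k z) i := by
  induction n generalizing f i with
  | zero => exact measurable_const
  | succ n ih =>
    refine .iSup fun j => .iSup fun _ => .add ?_ (ih (fun k => hf (k + 1)) j)
    exact (measurable_pi_apply j).comp ((measurable_pi_apply i).comp (hf 0))

theorem measurable_compSup {Z : Type*} [MeasurableSpace Z] (s : Set ι) (n : ℕ)
    {f : ℕ → Z → Mat ι} (hf : ∀ k, Measurable (f k)) :
    Measurable fun z => compSup s n fun k => f k z :=
  .iSup fun i => .iSup fun _ => measurable_walkSup s n hf i

theorem measurable_backSup (s : Set ι) (n : ℕ) : Measurable (backSup s n) :=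
  measurable_compSup (Z := ℤ → Mat ι) s n (f := fun k z => z (-((k : ℤ) + 1)))
    fun k => measurable_pi_apply (-((k : ℤ) + 1))

theorem measurable_fwdSup (s : Set ι) (n : ℕ) : Measurable (fwdSup s n) :=
  measurable_compSup (Z := ℤ → Mat ι) s n (f := fun k z => z ((n : ℤ) - 1 - k))
    fun k => measurable_pi_apply ((n : ℤ) - 1 - k)

theorem measurable_iSup_entry (m : ℤ) : Measurable fun z : ℤ → Mat ι => ⨆ i, ⨆ j, z m i j :=
  .iSup fun i => .iSup fun j =>
    (measurable_pi_apply j).comp ((measurable_pi_apply i).comp (measurable_pi_apply m))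

variable {ν : Measure (ℤ → Mat ι)} [IsProbabilityMeasure ν]

theorem measurableSet_forall_le {Z : Type*} [MeasurableSpace Z] {F : ℕ → Z → EReal}
    (hF : ∀ n, Measurable (F n)) (b : ℕ → EReal) : MeasurableSet {z | ∀ n, F n z ≤ b n} := by
  rw [Set.ofPred_forall]
  exact .iInter fun n => measurableSet_le (hF n) measurable_const

/-- If `G n = F n ∘ S^n` then the growth rate of `G` is at most that of `F`. -/
theorem limit_le_of_eq_comp_iterate {Z : Type*} [MeasurableSpace Z] {ρ : Measure Z}
    [IsProbabilityMeasure ρ] {S : Z → Z} (hS : MeasurePreserving S ρ ρ) {F G : ℕ → Z → EReal}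
    (hF : ∀ n, Measurable (F n)) (hFtop : ∀ᵐ z ∂ρ, ∀ n, F n z ≠ ⊤)
    (hG : ∀ n z, G n z = F n (S^[n] z)) {a b : EReal}
    (ha : ∀ᵐ z ∂ρ, Tendsto (fun n : ℕ => scale n (F n z)) atTop (𝓝 a))
    (hb : ∀ᵐ z ∂ρ, Tendsto (fun n : ℕ => scale n (G n z)) atTop (𝓝 b)) : b ≤ a := by
  refine EReal.le_of_forall_lt_iff_le.1 fun q hq => ?_
  obtain ⟨C, z, hz, hfreq⟩ := exists_frequently_iterate_mem hS
    (E := fun C => {z | ∀ n : ℕ, F n z ≤ ((q * n + C : ℝ) : EReal)})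
    (fun C => measurableSet_forall_le hF _)
    (by filter_upwards [ha, hFtop] with z h1 h2 using exists_forall_le_of_tendsto_scale h1 h2 hq)
    hb
  refine le_of_frequently_le_of_tendsto_scale (C := C) hz (hfreq.mono fun n hn => ?_)
  rw [hG]
  exact hn n

theorem ae_limits_of_ergodic (hT : Ergodic shift ν)
    (htop : ∀ᵐ z ∂ν, ∀ m i j, z m i j ≠ ⊤)
    (hint : ∫⁻ z, (⨆ i, ⨆ j, z 0 i j).toENNReal ∂ν ≠ ∞) (s : Set ι) :
    ∃ g : EReal, (∀ᵐ z ∂ν, Tendsto (fun n : ℕ => scale n (fwdSup s n z)) atTop (𝓝 g)) ∧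
      ∀ᵐ z ∂ν, Tendsto (fun n : ℕ => scale n (backSup s n z)) atTop (𝓝 g) := by
  have hS := ergodic_unshift hT
  obtain ⟨a, -, ha⟩ := exists_tendsto_scale_of_subadditive hT (measurable_fwdSup s)
    (fun z => compSup_zero_le s _) (fwdSup_add_le s) (by
      refine ((lintegral_mono fun z => EReal.toENNReal_le_toENNReal
        (compSup_one_le s _)).trans_lt (lt_top_iff_ne_top.2 ?_)).ne
      simpa using hint)
  obtain ⟨b, -, hb⟩ := exists_tendsto_scale_of_subadditive hS (measurable_backSup s)
    (fun z => compSup_zero_le s _) (backSup_add_le s) (by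
      refine ((lintegral_mono fun z => EReal.toENNReal_le_toENNReal
        (compSup_one_le s _)).trans_lt (lt_top_iff_ne_top.2 ?_)).ne
      rw [← hS.toMeasurePreserving.lintegral_comp (measurable_iSup_entry 0).ereal_toENNReal]
        at hint
      simpa [unshift] using hint)
  have hft : ∀ᵐ z ∂ν, ∀ n, fwdSup s n z ≠ ⊤ := by
    filter_upwards [htop] with z hz n using compSup_ne_top s n fun k => hz _
  have hbt : ∀ᵐ z ∂ν, ∀ n, backSup s n z ≠ ⊤ := by
    filter_upwards [htop] with z hz n using compSup_ne_top s n fun k => hz _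
  have hab : b = a := le_antisymm
    (limit_le_of_eq_comp_iterate hS.toMeasurePreserving (measurable_fwdSup s) hft
      (backSup_eq_fwdSup s) ha hb)
    (limit_le_of_eq_comp_iterate hT.toMeasurePreserving (measurable_backSup s) hbt
      (fwdSup_eq_backSup s) hb ha)
  exact ⟨a, ha, hab ▸ hb⟩

/-- The growth rate of a block triangular system is at most the maximum of the growth rates of
the diagonal blocks. -/
theorem limit_le_max_of_triangular (hT : Ergodic shift ν)
    (htop : ∀ᵐ z ∂ν, ∀ m i j, z m i j ≠ ⊤)
    (hint : ∫⁻ z, (⨆ i, ⨆ j, z 0 i j).toENNReal ∂ν ≠ ∞) {R U V : Set ι} (hR : R ⊆ U ∪ V)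
    (hV : ∀ᵐ z ∂ν, ∀ m, ∀ i ∈ V, ∀ j ∈ R, z m i j ≠ ⊥ → j ∈ V) {gR gU gV : EReal}
    (hgR : ∀ᵐ z ∂ν, Tendsto (fun n : ℕ => scale n (backSup R n z)) atTop (𝓝 gR))
    (hgU : ∀ᵐ z ∂ν, Tendsto (fun n : ℕ => scale n (backSup U n z)) atTop (𝓝 gU))
    (hgV : ∀ᵐ z ∂ν, Tendsto (fun n : ℕ => scale n (fwdSup V n z)) atTop (𝓝 gV)) :
    gR ≤ max gU gV := by
  refine EReal.le_of_forall_lt_iff_le.1 fun r hr => ?_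
  obtain ⟨q, hq, hqr⟩ := EReal.lt_iff_exists_real_btwn.1 hr
  rw [EReal.coe_lt_coe_iff] at hqr
  obtain ⟨hqU, hqV⟩ := max_lt_iff.1 hq
  have hS := ergodic_unshift hT
  have hentry := ae_tendsto_comp_iterate_scale hS
    (a := fun z : ℤ → Mat ι => (⨆ i, ⨆ j, z 0 i j) ⊔ 0)
    ((measurable_iSup_entry 0).sup measurable_const) (fun z => le_sup_right) (by
      convert hint using 3 with z
      rw [sup_comm, ← EReal.coe_toENNReal_eq_max, EReal.toENNReal_coe])
  obtain ⟨C, z, ⟨hzt, hzV, hzR, hzU, hze⟩, hfreq⟩ := exists_frequently_iterate_mem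
    hS.toMeasurePreserving
    (E := fun C => {z | ∀ n : ℕ, fwdSup V n z ≤ ((q * n + C : ℝ) : EReal)})
    (fun C => measurableSet_forall_le (measurable_fwdSup V) _)
    (by
      filter_upwards [hgV, htop] with z h1 h2
      exact exists_forall_le_of_tendsto_scale h1 (fun n => compSup_ne_top V n fun k => h2 _) hqV)
    (htop.and (hV.and (hgR.and (hgU.and hentry))))
  obtain ⟨C₁, hC₁⟩ := exists_forall_le_of_tendsto_scale hzU
    (fun n => compSup_ne_top U n fun k => hzt _) hqU
  obtain ⟨C₂, hC₂⟩ := exists_forall_le_of_tendsto_scale hze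
    (fun n => by
      simp only [unshift_iterate]
      refine ne_of_lt (max_lt (lt_top_iff_ne_top.2 ?_) EReal.zero_lt_top)
      exact iSup_ne_top_of_finite fun i => iSup_ne_top_of_finite fun j => hzt _ i j)
    (q := r - q) (by exact_mod_cast sub_pos.2 hqr)
  refine le_of_frequently_le_of_tendsto_scale (C := C₁ + C₂ + C + |q| + |q|) hzR
    (hfreq.mono fun n hn => iSup₂_le fun i hi => ?_)
  have hC0 : (0 : ℝ) ≤ C := Nat.cast_nonneg C
  have hC10 : (0 : ℝ) ≤ C₁ := Nat.cast_nonneg C₁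
  have hC20 : (0 : ℝ) ≤ C₂ := Nat.cast_nonneg C₂
  have hqa := le_abs_self q
  have hqa' := neg_abs_le q
  have hn0 : (0 : ℝ) ≤ (r - q) * n := mul_nonneg (sub_pos.2 hqr).le (Nat.cast_nonneg n)
  have hVc : ∀ k : ℕ, ∀ i ∈ V, ∀ j ∈ R, z (-((k : ℤ) + 1)) i j ≠ ⊥ → j ∈ V := fun k => hzV _
  have hback : ∀ k : ℕ, k ≤ n → ∀ j ∈ V,
      walkSup V (n - k) (fun l => z (-(((l + k : ℕ) : ℤ) + 1))) j ≤
        ((q * (n - k : ℝ) + C : ℝ) : EReal) := by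
    intro k hk j hj
    have h1 := (walkSup_le_compSup hj (n - k) fun l => z (-(((l + k : ℕ) : ℤ) + 1))).trans
      (le_of_eq_of_le ?_ (hn (n - k)))
    · rwa [Nat.cast_sub hk] at h1
    · rw [fwdSup, unshift_iterate]
      congr 1
      funext l
      push_cast [Nat.cast_sub hk]
      ring_nf
  rcases hR hi with hiU | hiV
  · refine (walkSup_le_iSup_exit hR hVc n
      (c := fun k => (((r - q) * n + C₂ + (q * (n - (k + 1)) + C) + |q| : ℝ) : EReal))
      ?_ (fun k hk i j hj => ?_) hiU).trans (iSup_le fun k => ?_)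
    · refine EReal.coe_nonneg.2 ?_
      nlinarith
    · have h1 := hback (k + 1) hk j hj
      rw [show n - (k + 1) = n - 1 - k by omega] at h1
      have h2 : z (-((k : ℤ) + 1)) i j ≤ (((r - q) * n + C₂ : ℝ) : EReal) := by
        have h3 := hC₂ (k + 1)
        rw [unshift_iterate] at h3
        have h4 : z (-((k : ℤ) + 1)) i j ≤ ⨆ i, ⨆ j, z (0 - ((k + 1 : ℕ) : ℤ)) i j := by
          have := le_iSup₂ (f := fun i j => z (0 - ((k + 1 : ℕ) : ℤ)) i j) i j
          simpa using this
        refine h4.trans (le_sup_left.trans (h3.trans (EReal.coe_le_coe_iff.2 ?_)))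
        have : ((k + 1 : ℕ) : ℝ) ≤ n := by exact_mod_cast hk
        have := mul_le_mul_of_nonneg_left this (sub_pos.2 hqr).le
        linarith
      refine (add_le_add h2 h1).trans ?_
      rw [← EReal.coe_add, EReal.coe_le_coe_iff]
      push_cast
      have := abs_nonneg q
      linarith
    · refine (add_le_add_left ((walkSup_le_compSup hiU k _).trans (hC₁ k)) _).trans ?_
      rw [← EReal.coe_add, EReal.coe_le_coe_iff]
      linarith
  · have h1 := (walkSup_le_of_closed hVc n hiV).trans (hback 0 (Nat.zero_le n) i hiV)
    refine h1.trans (EReal.coe_le_coe_iff.2 ?_)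
    have := abs_nonneg q
    push_cast
    linarith

end Growth

section Components

/-- If the growth rate of triangular systems is controlled by that of the diagonal blocks, then
that of a closed set of nodes is controlled by one of its strongly connected components. -/
theorem exists_component_le {ι : Type*} [Finite ι] (r : ι → ι → Prop) (g : Set ι → EReal)
    (hg : ∀ R U V : Set ι, R ⊆ U ∪ V → (∀ i ∈ V, ∀ j, r i j → j ∈ V) → g R ≤ max (g U) (g V))
    (R : Set ι) (hne : R.Nonempty) (hR : ∀ i ∈ R, ∀ j, r i j → j ∈ R) :
    ∃ i ∈ R, g R ≤
      g {j | Relation.ReflTransGen r i j ∧ Relation.ReflTransGen r j i} := by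
  induction R using WellFoundedLT.induction with
  | _ R ih =>
  have hreach : ∀ {i j}, i ∈ R → Relation.ReflTransGen r i j → j ∈ R := by
    intro i j hi hij
    induction hij with
    | refl => exact hi
    | tail _ h ih => exact hR _ ih _ h
  have hwf : WellFounded fun k i =>
      Relation.ReflTransGen r k i ∧ ¬ Relation.ReflTransGen r i k := by
    have h1 : IsTrans ι fun k i =>
        Relation.ReflTransGen r k i ∧ ¬ Relation.ReflTransGen r i k :=
      ⟨fun a b c hab hbc => ⟨hab.1.trans hbc.1, fun hca => hab.2 (hbc.1.trans hca)⟩⟩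
    have h2 : Std.Irrefl fun k i =>
        Relation.ReflTransGen r k i ∧ ¬ Relation.ReflTransGen r i k :=
      ⟨fun a h => h.2 h.1⟩
    exact Finite.wellFounded_of_trans_of_irrefl _
  obtain ⟨i, hi, hmin⟩ := hwf.has_min R hne
  set c := {j | Relation.ReflTransGen r i j ∧ Relation.ReflTransGen r j i} with hc
  have hclosed : ∀ k ∈ R \ c, ∀ j, r k j → j ∈ R \ c := by
    rintro k ⟨hk, hkc⟩ j hkj
    refine ⟨hR k hk j hkj, fun hj => hkc ?_⟩
    have hki : Relation.ReflTransGen r k i := (Relation.ReflTransGen.single hkj).trans hj.2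
    exact ⟨by_contra fun h => hmin k hk ⟨hki, h⟩, hki⟩
  have hle : g R ≤ max (g c) (g (R \ c)) :=
    hg R c (R \ c) (fun j hj => by by_cases h : j ∈ c <;> simp [h, hj]) hclosed
  rcases (R \ c).eq_empty_or_nonempty with he | hne'
  · refine ⟨i, hi, le_of_eq ?_⟩
    congr 1
    exact (Set.sdiff_eq_empty.1 he).antisymm fun j hj => hreach hi hj.1
  · have hlt : R \ c < R := by
      refine Set.sdiff_subset.ssubset_of_not_subset fun h => (h hi).2 ⟨.refl, .refl⟩
    obtain ⟨k, hk, hk'⟩ := ih _ hlt hne' hclosed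
    rcases le_max_iff.1 hle with h | h
    · exact ⟨i, hi, h⟩
    · exact ⟨k, hk.1, h.trans hk'⟩

end Components

section Limit

variable {ι : Type*}

theorem exists_frequently_of_frequently_exists {κ : Type*} [Finite κ] {p : κ → ℕ → Prop}
    (h : ∃ᶠ n in atTop, ∃ k, p k n) : ∃ k, ∃ᶠ n in atTop, p k n := by
  by_contra! hk
  refine h ?_
  filter_upwards [eventually_all.2 hk] with n hn
  simpa using hn

theorem tendsto_scale_succ {x : ℕ → EReal} {l : EReal}
    (h : Tendsto (fun n => scale n (x n)) atTop (𝓝 l)) {a : EReal} (ha : a ≠ ⊥) (ha' : a ≠ ⊤) :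
    Tendsto (fun n => scale (n + 1) (a + x n)) atTop (𝓝 l) := by
  lift a to ℝ using ⟨ha', ha⟩
  have h1 : Tendsto (fun n : ℕ => scale (n + 1) (a : EReal)) atTop (𝓝 0) :=
    (tendsto_scale_coe a).comp (tendsto_add_atTop_nat 1)
  have h2 : Tendsto (fun n : ℕ => (((n / (n + 1) : ℝ)) : EReal)) atTop (𝓝 ((1 : ℝ) : EReal)) :=
    (continuous_coe_real_ereal.tendsto 1).comp (tendsto_natCast_div_add_atTop 1)
  have h3 : Tendsto (fun n : ℕ => (((n / (n + 1) : ℝ)) : EReal) * scale n (x n)) atTop (𝓝 l) := by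
    have := (EReal.continuousAt_mul (p := (((1 : ℝ) : EReal), l)) (by simp) (by simp)
      (Or.inl (EReal.coe_ne_bot 1)) (Or.inl (EReal.coe_ne_top 1))).tendsto.comp (h2.prodMk_nhds h)
    simpa [Function.comp_def] using this
  have h4 : Tendsto (fun n : ℕ => scale (n + 1) (x n)) atTop (𝓝 l) := by
    refine h3.congr' ?_
    filter_upwards [eventually_gt_atTop 0] with n hn
    have hn' : (n : ℝ) ≠ 0 := by exact_mod_cast hn.ne'
    rw [scale, scale, ← mul_assoc, ← EReal.coe_mul]
    congr 2
    push_cast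
    field_simp
  have h5 := (EReal.continuousAt_add (p := (0, l)) (by simp) (by simp)).tendsto.comp
    (h1.prodMk_nhds h4)
  simpa [Function.comp_def, scale_add] using h5

variable {z : ℤ → Mat ι} {L : ι → EReal}

theorem yvec_eq_walkSup (z : ℤ → Mat ι) (n : ℕ) (i : ι) :
    yvec z n i = walkSup Set.univ n (fun k => z (-((k : ℤ) + 1))) i :=
  applyProd_eq_walkSup_univ n _ i

theorem yvec_succ (z : ℤ → Mat ι) (n : ℕ) (i : ι) :
    yvec z (n + 1) i = ⨆ j, z (-1) i j + yvec (unshift z) n j := by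
  rw [yvec, applyProd, mulVec]
  refine iSup_congr fun j => ?_
  congr 2

theorem limit_le_of_entry_ne_bot (htop : ∀ m i j, z m i j ≠ ⊤)
    (h : ∀ i, Tendsto (fun n => scale n (yvec z n i)) atTop (𝓝 (L i)))
    (h' : ∀ i, Tendsto (fun n => scale n (yvec (unshift z) n i)) atTop (𝓝 (L i))) {i j : ι}
    (hij : z (-1) i j ≠ ⊥) : L j ≤ L i := by
  refine le_of_tendsto_of_tendsto' (tendsto_scale_succ (h' j) hij (htop _ _ _))
    ((h i).comp (tendsto_add_atTop_nat 1)) fun n => scale_mono _ ?_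
  rw [yvec_succ]
  exact le_iSup (fun j => z (-1) i j + yvec (unshift z) n j) j

theorem exists_entry_ne_bot_limit_le [Finite ι] (htop : ∀ m i j, z m i j ≠ ⊤)
    (h : ∀ i, Tendsto (fun n => scale n (yvec z n i)) atTop (𝓝 (L i)))
    (h' : ∀ i, Tendsto (fun n => scale n (yvec (unshift z) n i)) atTop (𝓝 (L i))) {i : ι}
    (hrow : ∃ j, z (-1) i j ≠ ⊥) : ∃ j, z (-1) i j ≠ ⊥ ∧ L i ≤ L j := by
  have : Nonempty ι := ⟨i⟩
  have h1 : ∃ᶠ n in atTop, ∃ j, yvec z (n + 1) i = z (-1) i j + yvec (unshift z) n j := by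
    refine Frequently.of_forall fun n => ?_
    obtain ⟨j, hj⟩ := exists_eq_ciSup_of_finite
      (f := fun j => z (-1) i j + yvec (unshift z) n j)
    exact ⟨j, by rw [yvec_succ, ← hj]⟩
  obtain ⟨j, hj⟩ := exists_frequently_of_frequently_exists h1
  have h2 := (h i).comp (tendsto_add_atTop_nat 1)
  by_cases hb : z (-1) i j = ⊥
  · have h3 : L i ≤ ⊥ := by
      refine le_of_tendsto_of_frequently h2 (hj.mono fun n hn => ?_)
      simp [Function.comp_apply, hn, hb, scale_bot]
    obtain ⟨k, hk⟩ := hrow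
    exact ⟨k, hk, h3.trans bot_le⟩
  · refine ⟨j, hb, le_of_tendsto_of_tendsto_of_frequently h2
      (tendsto_scale_succ (h' j) hb (htop _ _ _)) (hj.mono fun n hn => ?_)⟩
    simp [Function.comp_apply, hn]

end Limit

section Main

variable {d : ℕ} {Ω : Type*} [MeasurableSpace Ω] {μ : Measure Ω} {A : ℤ → Ω → Mat (Fin d)}

theorem measurable_entry (m : ℤ) (i j : Fin d) :
    Measurable fun z : ℤ → Mat (Fin d) => z m i j :=
  (measurable_pi_apply j).comp ((measurable_pi_apply i).comp (measurable_pi_apply m))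

theorem lintegral_law_ne_top (hmeas : ∀ n, Measurable (A n)) (hnotop : ∀ n ω i j, A n ω i j ≠ ⊤)
    (hint : Integrable (fun ω => ((⨆ i, ⨆ j, A 0 ω i j) ⊔ 0).toReal) μ) :
    ∫⁻ z, (⨆ i, ⨆ j, z 0 i j).toENNReal ∂(μ.map fun ω n => A n ω) ≠ ∞ := by
  rw [lintegral_map (measurable_iSup_entry 0).ereal_toENNReal (measurable_pi_lambda _ hmeas)]
  refine ne_of_lt (lt_of_eq_of_lt (lintegral_congr fun ω => ?_) hint.lintegral_lt_top)
  have h : (⨆ i, ⨆ j, A 0 ω i j) ⊔ 0 ≠ ⊤ := ne_of_lt (max_lt (lt_top_iff_ne_top.2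
    (iSup_ne_top_of_finite fun i => iSup_ne_top_of_finite fun j => hnotop 0 ω i j))
    EReal.zero_lt_top)
  rw [← EReal.toENNReal_of_ne_top h, sup_comm, ← EReal.coe_toENNReal_eq_max, EReal.toENNReal_coe]

theorem ae_law_ne_top (hmeas : ∀ n, Measurable (A n)) (hnotop : ∀ n ω i j, A n ω i j ≠ ⊤) :
    ∀ᵐ z ∂(μ.map fun ω n => A n ω), ∀ m i j, z m i j ≠ ⊤ := by
  simp only [ae_all_iff]
  intro m i j
  rw [ae_map_iff (measurable_pi_lambda _ hmeas).aemeasurable]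
  · exact .of_forall fun ω => hnotop m ω i j
  · exact (measurable_entry m i j) (measurableSet_singleton ⊤).compl

theorem ae_law_arc (hmeas : ∀ n, Measurable (A n)) (herg : IsStationaryErgodic μ A) :
    ∀ᵐ z ∂(μ.map fun ω n => A n ω), ∀ m i j, z m i j ≠ ⊥ → Arc μ A i j := by
  refine ae_forall_coord (p := fun M : Mat (Fin d) => ∀ i j, M i j ≠ ⊥ → Arc μ A i j) herg ?_
  simp only [ae_all_iff]
  intro i j
  by_cases h : Arc μ A i j
  · exact .of_forall fun _ _ => h
  · have h0 : ∀ᵐ z ∂(μ.map fun ω n => A n ω), z 0 i j = ⊥ := by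
      rw [ae_map_iff (measurable_pi_lambda _ hmeas).aemeasurable, ae_iff]
      · exact nonpos_iff_eq_zero.1 (not_lt.1 h)
      · exact (measurable_entry 0 i j) (measurableSet_singleton ⊥)
    filter_upwards [h0] with z hz hne using absurd hz hne

theorem ae_law_tendsto (hmeas : ∀ n, Measurable (A n)) {L : Fin d → EReal}
    (hL : ∀ᵐ ω ∂μ, ∀ i, Tendsto (fun n : ℕ => scale n (yvec (fun m => A m ω) n i)) atTop
      (𝓝 (L i))) :
    ∀ᵐ z ∂(μ.map fun ω n => A n ω), ∀ i,
      Tendsto (fun n : ℕ => scale n (yvec z n i)) atTop (𝓝 (L i)) := by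
  rw [ae_all_iff] at hL ⊢
  intro i
  rw [ae_map_iff (measurable_pi_lambda _ hmeas).aemeasurable]
  · exact hL i
  · refine measurableSet_tendsto (𝓝 (L i)) fun n => Measurable.const_mul ?_ _
    simp only [yvec_eq_walkSup]
    exact measurable_walkSup (Z := ℤ → Mat (Fin d)) Set.univ n
      (f := fun k z => z (-((k : ℤ) + 1))) (fun k => measurable_pi_apply (-((k : ℤ) + 1))) i

theorem gammaComp_isLimit [IsProbabilityMeasure μ] (hmeas : ∀ n, Measurable (A n)) (hnotop : ∀ n ω i j, A n ω i j ≠ ⊤)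
    (herg : IsStationaryErgodic μ A)
    (hint : Integrable (fun ω => ((⨆ i, ⨆ j, A 0 ω i j) ⊔ 0).toReal) μ) (s : Set (Fin d)) :
    (∀ᵐ z ∂(μ.map fun ω n => A n ω),
      Tendsto (fun n : ℕ => scale n (fwdSup s n z)) atTop (𝓝 (gammaComp μ A s))) ∧
    ∀ᵐ z ∂(μ.map fun ω n => A n ω),
      Tendsto (fun n : ℕ => scale n (backSup s n z)) atTop (𝓝 (gammaComp μ A s)) := by
  have hm := measurable_pi_lambda (fun ω n => A n ω) hmeas
  have : IsProbabilityMeasure (μ.map fun ω n => A n ω) :=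
    Measure.isProbabilityMeasure_map hm.aemeasurable
  obtain ⟨g, hf, hb⟩ := ae_limits_of_ergodic herg (ae_law_ne_top hmeas hnotop)
    (lintegral_law_ne_top hmeas hnotop hint) s
  have hg : gammaComp μ A s = g := by
    refine IsLyapunovExponent.lyapunov_eq ?_
    filter_upwards [ae_of_ae_map hm.aemeasurable hf] with ω hω
    simp only [← iSup_xvec_restrict] at hω
    exact hω
  rw [hg]
  exact ⟨hf, hb⟩

end Main

end MaxPlus

open MaxPlus

theorem submatrix_row_finite_of_deterministic_y_limit
    {d : ℕ} {Ω : Type*} [MeasurableSpace Ω] (μ : Measure Ω) [IsProbabilityMeasure μ]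
    (A : ℤ → Ω → MaxPlus.Mat (Fin d))
    (hmeas : ∀ n, Measurable (A n))
    (hnotop : ∀ n ω i j, A n ω i j ≠ ⊤)
    (herg : MaxPlus.IsStationaryErgodic μ A)
    (hrow : ∀ᵐ ω ∂μ, MaxPlus.RowFinite (A 0 ω))
    (hint : Integrable (fun ω => ((⨆ i, ⨆ j, A 0 ω i j) ⊔ 0).toReal) μ)
    (hlim : ∃ L : Fin d → EReal, ∀ᵐ ω ∂μ, ∀ i,
      Tendsto (fun n : ℕ => MaxPlus.scale n (MaxPlus.yvec (fun m => A m ω) n i))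
        atTop (𝓝 (L i))) :
    ∀ c : Set (Fin d), MaxPlus.IsSCC μ A c →
      ∀ᵐ ω ∂μ, MaxPlus.RowFinite (MaxPlus.sub A (MaxPlus.H μ A c) 0 ω) := by
  intro c _
  obtain ⟨L, hL⟩ := hlim
  have hm := (measurable_pi_lambda (fun ω n => A n ω) hmeas).aemeasurable (μ := μ)
  set ν := μ.map fun ω n => A n ω
  have : IsProbabilityMeasure ν := Measure.isProbabilityMeasure_map hm
  have htop : ∀ᵐ z ∂ν, ∀ m i j, z m i j ≠ ⊤ := ae_law_ne_top hmeas hnotop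
  have harc : ∀ᵐ z ∂ν, ∀ m i j, z m i j ≠ ⊥ → Arc μ A i j := ae_law_arc hmeas herg
  have hlimν := ae_law_tendsto hmeas hL
  have hgamma := gammaComp_isLimit hmeas hnotop herg hint
  have hback : ∀ᵐ z ∂ν, (∀ i j, z (-1) i j ≠ ⊥ → L j ≤ L i) ∧
      ∀ i, (∃ j, z (-1) i j ≠ ⊥) → ∃ j, z (-1) i j ≠ ⊥ ∧ L i ≤ L j := by
    filter_upwards [htop, hlimν, ae_unshift herg hlimν] with z h1 h2 h3
    exact ⟨fun i j hij => limit_le_of_entry_ne_bot h1 h2 h3 hij,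
      fun i hi => exists_entry_ne_bot_limit_le h1 h2 h3 hi⟩
  have hzero : ∀ᵐ ω ∂μ, (∀ i j, A 0 ω i j ≠ ⊥ → L j ≤ L i) ∧
      ∀ i, (∃ j, A 0 ω i j ≠ ⊥) → ∃ j, A 0 ω i j ≠ ⊥ ∧ L i ≤ L j :=
    ae_of_ae_map hm (ae_shift herg hback)
  have hReach : ∀ {i j}, Reach μ A i j → L j ≤ L i := by
    intro i j hij
    induction hij with
    | refl => exact le_rfl
    | tail _ h ih =>
      obtain ⟨ω, h1, h2⟩ := ((frequently_ae_mem_iff.2 h.ne').and_eventually hzero).exists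
      exact (h2.1 _ _ h1).trans ih
  have hlower : ∀ c', IsSCC μ A c' → ∀ j ∈ c', gammaComp μ A c' ≤ L j := by
    rintro c' ⟨i, rfl⟩ j ⟨hij, hji⟩
    set c' := {j | Reach μ A i j ∧ Reach μ A j i}
    have : Nonempty c' := ⟨⟨i, .refl, .refl⟩⟩
    obtain ⟨z, h1, h2⟩ := ((hgamma c').2.and hlimν).exists
    have h3 : ∃ᶠ n in atTop, ∃ k : c', backSup c' n z ≤ yvec z n k := by
      refine Frequently.of_forall fun n => ?_
      obtain ⟨k, hk⟩ := exists_eq_ciSup_of_finite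
        (f := fun k : c' => walkSup c' n (fun k => z (-((k : ℤ) + 1))) k)
      refine ⟨k, ?_⟩
      rw [backSup, compSup, iSup_subtype', ← hk, yvec_eq_walkSup]
      exact walkSup_mono (Set.subset_univ _) _ _ _
    obtain ⟨k, hk⟩ := exists_frequently_of_frequently_exists h3
    exact (le_of_tendsto_of_tendsto_of_frequently h1 (h2 k)
      (hk.mono fun n hn => scale_mono n hn)).trans (hReach (hji.trans k.2.1))
  have hupper : ∀ j, ∃ i, Reach μ A j i ∧
      L j ≤ gammaComp μ A {k | Reach μ A i k ∧ Reach μ A k i} := by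
    intro j
    set R : Set (Fin d) := {k | Reach μ A j k}
    have hR : ∀ i ∈ R, ∀ k, Arc μ A i k → k ∈ R := fun i hi k hik => hi.tail hik
    obtain ⟨i, hi, hle⟩ := exists_component_le (Arc μ A) (gammaComp μ A)
      (fun R U V hRUV hV => limit_le_max_of_triangular herg htop
        (lintegral_law_ne_top hmeas hnotop hint) hRUV
        (by filter_upwards [harc] with z hz m i hi j _ hij using hV i hi j (hz m i j hij))
        (hgamma R).2 (hgamma U).2 (hgamma V).1) R ⟨j, .refl⟩ hR
    refine ⟨i, hi, le_trans ?_ hle⟩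
    obtain ⟨z, h1, h2, h3⟩ := ((hgamma R).2.and (hlimν.and harc)).exists
    refine le_of_tendsto_of_tendsto' (h2 j) h1 fun n => scale_mono n ?_
    rw [yvec_eq_walkSup]
    have hj : j ∈ R := .refl
    exact (walkSup_le_of_closed (fun k i hi l _ hil => hR i hi l (h3 _ i l hil)) n hj).trans
      (walkSup_le_compSup hj n _)
  filter_upwards [hrow, ae_of_ae_map hm harc, hzero] with ω h1 h2 h3
  rintro ⟨i, c', hc', ⟨a, ha, _, rfl, hai⟩, ⟨_, rfl, b, hb, hib⟩, heq⟩
  obtain ⟨j, hj, hij⟩ := h3.2 _ (h1 _)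
  obtain ⟨k, hjk, hk⟩ := hupper j
  have haj := Relation.ReflTransGen.tail hai (h2 0 _ _ hj)
  have hscc : IsSCC μ A {l | Reach μ A k l ∧ Reach μ A l k} := ⟨k, rfl⟩
  have hkk : k ∈ {l | Reach μ A k l ∧ Reach μ A l k} := ⟨.refl, .refl⟩
  refine ⟨⟨j, {l | Reach μ A k l ∧ Reach μ A l k}, hscc, ⟨a, ha, j, rfl, haj⟩,
    ⟨j, rfl, k, hkk, hjk⟩, le_antisymm ?_ ?_⟩, hj⟩
  · exact le_iSup₂_of_le (f := fun c' (_ : c' ∈ {c' | IsSCC μ A c' ∧ SetReach μ A c c'}) =>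
      gammaComp μ A c') _ ⟨hscc, a, ha, k, hkk, haj.trans hjk⟩ le_rfl
  · rw [← heq]
    exact (hlower c' hc' b hb).trans ((hReach hib).trans (hij.trans hk))
end
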